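/- For all integers k ≥ 1, s ≥ 0, r ≥ 0 with s and r both odd and s + r < k, GR_k((k−s−r)P3, sK3, rH3) = 16·5^((s−1)/2)·17^((r−1)/2) + 1. -/

import Mathlib

open SimpleGraph

/-- A rainbow triangle in an edge-coloring of a complete graph: three distinct
vertices whose three pairwise edges receive three pairwise distinct colors. -/
def HasRainbowTriangle {n k : ℕ} (c : Fin n → Fin n → Fin k) : Prop :=
  ∃ u v w : Fin n, u ≠ v ∧ u ≠ w ∧ v ≠ w ∧
    c u v ≠ c u w ∧ c u v ≠ c v w ∧ c u w ≠ c v w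

/-- A Gallai `k`-coloring of `K_n`: a symmetric edge-coloring with no rainbow triangle. -/
def IsGallaiColoring {n k : ℕ} (c : Fin n → Fin n → Fin k) : Prop :=
  (∀ u v, c u v = c v u) ∧ ¬ HasRainbowTriangle c

/-- A monochromatic copy of the graph `F` in color `i`: an injection of the vertices
of `F` into the vertices of `K_n` mapping every edge of `F` to an edge colored `i`. -/
def HasMonoCopy {V : Type} (F : SimpleGraph V) {n k : ℕ}
    (c : Fin n → Fin n → Fin k) (i : Fin k) : Prop :=
  ∃ f : V → Fin n, Function.Injective f ∧ ∀ a b, F.Adj a b → c (f a) (f b) = i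

/-- The Gallai-Ramsey number `GR(F₁, …, F_k)`: the least `n` such that every Gallai
`k`-coloring of `K_n` contains, for some color `i`, a monochromatic copy of `Fᵢ`
in color `i`. -/
noncomputable def GR (k : ℕ) (F : Fin k → Σ V : Type, SimpleGraph V) : ℕ :=
  sInf {n : ℕ | ∀ c : Fin n → Fin n → Fin k, IsGallaiColoring c →
    ∃ i : Fin k, HasMonoCopy (F i).2 c i}

/-- The triangle `K₃`. -/
def GK3 : SimpleGraph (Fin 3) := ⊤

/-- The path `P₃` on three vertices (edges 0–1 and 1–2). -/
def GP3 : SimpleGraph (Fin 3) := SimpleGraph.fromRel (fun a _ => a = 1)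

/-- `H₁`: a `K₄` on `{0,1,2,3}` together with the extra vertex `4` adjacent to
exactly the vertex `3`. -/
def GH1 : SimpleGraph (Fin 5) :=
  SimpleGraph.fromRel (fun a b => (a ≠ 4 ∧ b ≠ 4) ∨ (a = 3 ∧ b = 4))

/-- `H₂`: `K₅` minus the two edges 0–1 and 1–2 of a path on three vertices. -/
def GH2 : SimpleGraph (Fin 5) :=
  (⊤ : SimpleGraph (Fin 5)) \
    SimpleGraph.fromRel (fun a b => (a = 0 ∧ b = 1) ∨ (a = 1 ∧ b = 2))

/-- `H₃`: `K₅` minus the edge 0–1. -/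
def GH3 : SimpleGraph (Fin 5) :=
  (⊤ : SimpleGraph (Fin 5)) \ SimpleGraph.fromRel (fun a b => a = 0 ∧ b = 1)
/-- The family of graphs for `GR_k((k-s-r)P₃, sK₃, rH₃)`: the graph `H₃` in each of
the first `r` colors, the triangle `K₃` in each of the next `s` colors, and the path
`P₃` in each of the remaining `k - s - r` colors. -/
def mixPKH (k s r : ℕ) : Fin k → Σ V : Type, SimpleGraph V :=
  fun i =>
    if (i : ℕ) < r then ⟨Fin 5, GH3⟩
    else if (i : ℕ) < r + s then ⟨Fin 3, GK3⟩
    else ⟨Fin 3, GP3⟩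





namespace GRX
open Classical Finset

variable {V K : Type}

/-- `Q` is a clique in colour `p`. -/
def Cl (c : V → V → K) (p : K) (Q : Finset V) : Prop :=
  ∀ u ∈ Q, ∀ v ∈ Q, u ≠ v → c u v = p

/-- `X` has no `K_{m+2}` minus an edge in colour `p`. -/
def Fr (c : V → V → K) (X : Finset V) (p : K) (m : ℕ) : Prop :=
  ∀ Q ⊆ X, Cl c p Q → Q.card = m → ∀ u ∈ X, ∀ v ∈ X, u ∉ Q → v ∉ Q →
    (∀ q ∈ Q, c u q = p) → (∀ q ∈ Q, c v q = p) → u = v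

/-- `v` lies in a `K_{m+1}` of colour `p` in `X`. -/
def Bd (c : V → V → K) (X : Finset V) (p : K) (m : ℕ) (v : V) : Prop :=
  ∃ Q ⊆ X, Cl c p Q ∧ Q.card = m + 1 ∧ v ∈ Q

def Bad (c : V → V → K) (X : Finset V) (l : K → ℕ) (v : V) : Prop :=
  ∃ p, Bd c X p (l p) v

noncomputable def wt (c : V → V → K) (X : Finset V) (l : K → ℕ) (v : V) : ℕ :=
  if Bad c X l v then 1 else 2

noncomputable def W (c : V → V → K) (X : Finset V) (l : K → ℕ) : ℕ :=
  ∑ v ∈ X, wt c X l v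

def AdC (c : V → V → K) (X S : Finset V) (p : K) (m m' : ℕ) : Prop :=
  Fr c S p m' ∧ ∀ v, Bd c S p m' v → Bd c X p m v

def HasCl (c : V → V → K) (A : Finset V) (p : K) (a : ℕ) : Prop :=
  ∃ Q ⊆ A, Cl c p Q ∧ Q.card = a

def Gal (c : V → V → K) : Prop :=
  (∀ u v, c u v = c v u) ∧ ∀ u v w, u ≠ v → u ≠ w → v ≠ w →
    c u v = c u w ∨ c u v = c v w ∨ c u w = c v w

variable {c : V → V → K} {X S : Finset V} {p : K} {m : ℕ} {l l' : K → ℕ}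

lemma Cl.insert (hs : ∀ u v, c u v = c v u) {Q : Finset V} {u : V} (hQ : Cl c p Q)
    (h : ∀ q ∈ Q, q ≠ u → c u q = p) : Cl c p (insert u Q) := by
  intro a ha b hb hab
  rcases Finset.mem_insert.1 ha with h1 | h1 <;> rcases Finset.mem_insert.1 hb with h2 | h2
  · exact absurd (h1.trans h2.symm) hab
  · rw [h1]; exact h b h2 (fun h => hab (h1.trans h.symm))
  · rw [hs, h2]; exact h a h1 (fun h => hab (h.trans h2.symm))
  · exact hQ a h1 b h2 hab

lemma Cl.mono {Q Q' : Finset V} (h : Cl c p Q) (hQ : Q' ⊆ Q) : Cl c p Q' :=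
  fun u hu v hv => h u (hQ hu) v (hQ hv)

lemma Cl.empty : Cl c p ∅ := fun u hu => by simp at hu

lemma Cl.single (u : V) : Cl c p {u} := by
  intro a ha b hb hab
  simp at ha hb; subst ha; subst hb; exact absurd rfl hab

lemma Cl.pair (hs : ∀ u v, c u v = c v u) {u v : V} (h : c u v = p) : Cl c p {u, v} :=
  Cl.insert hs (Cl.single v) (by intro q hq _; simp at hq; subst hq; exact h)

lemma Fr.mono (h : Fr c X p m) (hS : S ⊆ X) : Fr c S p m :=
  fun Q hQ hc hm u hu v hv => h Q (hQ.trans hS) hc hm u (hS hu) v (hS hv)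

lemma Bd.mono {v : V} (h : Bd c S p m v) (hS : S ⊆ X) : Bd c X p m v := by
  obtain ⟨Q, hQ, h⟩ := h; exact ⟨Q, hQ.trans hS, h⟩

lemma AdC.refl (h : Fr c X p m) (hS : S ⊆ X) : AdC c X S p m m :=
  ⟨h.mono hS, fun _ hv => hv.mono hS⟩

lemma AdC.trans {T : Finset V} {m' m'' : ℕ} (h : AdC c X S p m m') (h' : AdC c S T p m' m'') :
    AdC c X T p m m'' := ⟨h'.1, fun v hv => h.2 v (h'.2 v hv)⟩

lemma HasCl.one {A : Finset V} (h : A.Nonempty) : HasCl c A p 1 := by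
  obtain ⟨a, ha⟩ := h
  exact ⟨{a}, by simpa using ha, Cl.single a, by simp⟩

lemma HasCl.two_ne {A : Finset V} (h : HasCl c A p 2) : ∃ a ∈ A, ∃ b ∈ A, a ≠ b := by
  obtain ⟨Q, hQ, -, h2⟩ := h
  obtain ⟨a, b, hab, rfl⟩ := Finset.card_eq_two.1 h2
  exact ⟨a, hQ (by simp), b, hQ (by simp), hab⟩

lemma wt_le_two (v : V) : wt c X l v ≤ 2 := by unfold wt; split_ifs <;> omega
lemma one_le_wt (v : V) : 1 ≤ wt c X l v := by unfold wt; split_ifs <;> omega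
lemma wt_bad {v : V} (h : Bad c X l v) : wt c X l v = 1 := by unfold wt; simp [h]
lemma wt_good {v : V} (h : ¬ Bad c X l v) : wt c X l v = 2 := by unfold wt; simp [h]
lemma bad_of_wt {v : V} (h : wt c X l v < 2) : Bad c X l v := by
  by_contra hb; rw [wt_good hb] at h; omega

lemma wt_le (h : ∀ p, AdC c X S p (l p) (l' p)) (v : V) : wt c X l v ≤ wt c S l' v := by
  by_cases hb : Bad c S l' v
  · obtain ⟨p, hp⟩ := hb
    rw [wt_bad ⟨p, (h p).2 v hp⟩]; exact one_le_wt v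
  · rw [wt_good hb]; exact wt_le_two v

lemma sum_le_W (h : ∀ p, AdC c X S p (l p) (l' p)) : ∑ v ∈ S, wt c X l v ≤ W c S l' :=
  Finset.sum_le_sum fun v _ => wt_le h v

lemma adm_of_join (hs : ∀ u v, c u v = c v u) {A B : Finset V} {a b : ℕ} (hA : A ⊆ X) (hB : B ⊆ X)
    (hAB : ∀ x ∈ A, ∀ y ∈ B, x ≠ y ∧ c x y = p) (hc : HasCl c A p a) (hF : Fr c X p m)
    (hm : a + b = m) : AdC c X B p m b := by
  obtain ⟨R, hR, hRc, hRa⟩ := hc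
  have key : ∀ Q ⊆ B, Cl c p Q → Cl c p (Q ∪ R) ∧ (Q ∪ R).card = Q.card + a ∧ Q ∪ R ⊆ X := by
    intro Q hQ hQc
    refine ⟨?_, ?_, Finset.union_subset (hQ.trans hB) (hR.trans hA)⟩
    · intro u hu v hv huv
      rcases Finset.mem_union.1 hu with hu | hu <;> rcases Finset.mem_union.1 hv with hv | hv
      · exact hQc u hu v hv huv
      · rw [hs]; exact (hAB v (hR hv) u (hQ hu)).2
      · exact (hAB u (hR hu) v (hQ hv)).2
      · exact hRc u hu v hv huv
    · rw [Finset.card_union_of_disjoint, hRa]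
      rw [Finset.disjoint_left]
      intro x hx hx'
      exact (hAB x (hR hx') x (hQ hx)).1 rfl
  refine ⟨?_, ?_⟩
  · intro Q hQ hQc hQm u hu v hv huQ hvQ h1 h2
    obtain ⟨k1, k2, k3⟩ := key Q hQ hQc
    have aux : ∀ u ∈ B, u ∉ Q → (∀ q ∈ Q, c u q = p) → u ∉ Q ∪ R ∧ ∀ q ∈ Q ∪ R, c u q = p := by
      intro u hu huQ h1
      constructor
      · simp only [Finset.mem_union, not_or]
        exact ⟨huQ, fun h => (hAB u (hR h) u hu).1 rfl⟩
      · intro q hq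
        rcases Finset.mem_union.1 hq with hq | hq
        · exact h1 q hq
        · rw [hs]; exact (hAB q (hR hq) u hu).2
    exact hF (Q ∪ R) k3 k1 (by omega) u (hB hu) v (hB hv) (aux u hu huQ h1).1 (aux v hv hvQ h2).1
      (aux u hu huQ h1).2 (aux v hv hvQ h2).2
  · rintro v ⟨Q, hQ, hQc, hQm, hv⟩
    obtain ⟨k1, k2, k3⟩ := key Q hQ hQc
    exact ⟨Q ∪ R, k3, k1, by omega, Finset.mem_union_left _ hv⟩

lemma adm_of_no (hs : ∀ u v, c u v = c v u) {a : ℕ} (h : ¬ HasCl c S p (a + 1)) :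
    AdC c X S p m a := by
  refine ⟨?_, ?_⟩
  · intro Q hQ hQc hQm u hu v hv huQ hvQ h1 h2
    exfalso; apply h
    refine ⟨insert u Q, Finset.insert_subset hu hQ, Cl.insert hs hQc (fun q hq _ => h1 q hq), ?_⟩
    rw [Finset.card_insert_of_notMem huQ, hQm]
  · rintro v ⟨Q, hQ, hQc, hQm, hv⟩
    exact absurd ⟨Q, hQ, hQc, hQm⟩ h

/-- in a level-one colour, an edge joins twins -/
lemma twin (hg : Gal c) {u v w : V} (hl : Fr c X (c u v) 1) (hu : u ∈ X) (hv : v ∈ X)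
    (hw : w ∈ X) (huv : u ≠ v) (hwu : w ≠ u) (hwv : w ≠ v) :
    c u w = c v w ∧ c u w ≠ c u v := by
  have h1 : c u w ≠ c u v := by
    intro h
    refine hwv (hl {u} (by simpa using hu) (Cl.single u) (by simp) w hw v hv (by simpa using hwu)
      (by simpa using huv.symm) ?_ ?_)
    · intro q hq; simp at hq; subst hq; rw [hg.1, h]
    · intro q hq; simp at hq; subst hq; rw [hg.1]
  have h2 : c v w ≠ c u v := by
    intro h
    refine hwu (hl {v} (by simpa using hv) (Cl.single v) (by simp) w hw u hu (by simpa using hwv)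
      (by simpa using huv) ?_ ?_)
    · intro q hq; simp at hq; subst hq; rw [hg.1, h]
    · intro q hq; simp at hq; subst hq; rfl
  rcases hg.2 u v w huv hwu.symm hwv.symm with h | h | h
  · exact absurd h.symm h1
  · exact absurd h.symm h2
  · exact ⟨h, h1⟩

/-- one end of a level-one edge is good after deleting the other one -/
lemma good_of_twin (hg : Gal c) {u v : V} (hF : ∀ p, Fr c X p (l p)) (hu : u ∈ X) (hv : v ∈ X)
    (huv : u ≠ v) (h1 : l (c u v) = 1) {Y : Finset V} (hY : Y ⊆ X.erase v) :
    ¬ Bad c Y l u := by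
  have hF1 : Fr c X (c u v) 1 := by have := hF (c u v); rwa [h1] at this
  rintro ⟨p, Q, hQ, hQc, hQm, huQ⟩
  have hQX : Q ⊆ X := hQ.trans (hY.trans (Finset.erase_subset _ _))
  have hvQ : v ∉ Q := fun h => by simpa using hY (hQ h)
  by_cases hp : p = c u v
  · subst hp
    rw [h1] at hQm
    obtain ⟨w, hw, hwu⟩ := Finset.exists_mem_ne (by omega : 1 < Q.card) u
    exact (twin hg hF1 hu hv (hQX hw) huv hwu (fun h => hvQ (h ▸ hw))).2 (hQc u huQ w hw hwu.symm)
  · refine huv (hF p (Q.erase u) ((Finset.erase_subset _ _).trans hQX)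
      (hQc.mono (Finset.erase_subset _ _)) (by rw [Finset.card_erase_of_mem huQ]; omega)
      u hu v hv (by simp) (fun h => hvQ (Finset.mem_of_mem_erase h)) ?_ ?_)
    · intro q hq
      exact hQc u huQ q (Finset.mem_of_mem_erase hq) (Finset.ne_of_mem_erase hq).symm
    · intro q hq
      have hqQ := Finset.mem_of_mem_erase hq
      rw [← (twin hg hF1 hu hv (hQX hqQ) huv (Finset.ne_of_mem_erase hq)
        (fun h => hvQ (h ▸ hqQ))).1]
      exact hQc u huQ q hqQ (Finset.ne_of_mem_erase hq).symm

lemma W_erase (hg : Gal c) {u v : V} (hF : ∀ p, Fr c X p (l p)) (hu : u ∈ X) (hv : v ∈ X)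
    (huv : u ≠ v) (h1 : l (c u v) = 1) : W c X l ≤ W c (X.erase v) l := by
  have hbu : Bad c X l u := ⟨c u v, {u, v}, by
    intro x hx; simp at hx; rcases hx with rfl | rfl <;> assumption,
    Cl.pair hg.1 rfl, by rw [Finset.card_pair huv, h1], by simp⟩
  have hbv : Bad c X l v := ⟨c u v, {u, v}, by
    intro x hx; simp at hx; rcases hx with rfl | rfl <;> assumption,
    Cl.pair hg.1 rfl, by rw [Finset.card_pair huv, h1], by simp⟩
  have hgu := good_of_twin hg hF hu hv huv h1 (Finset.Subset.refl (X.erase v))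
  have hux : u ∈ X.erase v := Finset.mem_erase.2 ⟨huv, hu⟩
  unfold W
  rw [← Finset.add_sum_erase X _ hv, ← Finset.add_sum_erase _ _ hux,
    ← Finset.add_sum_erase _ _ hux, wt_bad hbu, wt_bad hbv, wt_good hgu]
  have : ∑ x ∈ (X.erase v).erase u, wt c X l x ≤ ∑ x ∈ (X.erase v).erase u, wt c (X.erase v) l x :=
    Finset.sum_le_sum fun x _ => wt_le (fun p => AdC.refl (hF p) (Finset.erase_subset _ _)) x
  omega

end GRX


namespace GRX
open Classical Finset

variable {V K : Type}

/-- one step along an edge of `X` whose colour is neither `i` nor `j` -/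
def Stp (c : V → V → K) (X : Finset V) (i j : K) (u v : V) : Prop :=
  u ∈ X ∧ v ∈ X ∧ c u v ≠ i ∧ c u v ≠ j

def Rch (c : V → V → K) (X : Finset V) (i j : K) : V → V → Prop :=
  Relation.ReflTransGen (Stp c X i j)

/-- a partition of `X` into modules, with only the colours `i`, `j` between parts -/
structure Part (c : V → V → K) (X : Finset V) (i j : K) (R : V → V → Prop) : Prop where
  refl : ∀ u, R u u
  symm : ∀ {u v}, R u v → R v u
  trans : ∀ {u v w}, R u v → R v w → R u w
  cross : ∀ u ∈ X, ∀ v ∈ X, ¬ R u v → c u v = i ∨ c u v = j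
  mod : ∀ u ∈ X, ∀ u' ∈ X, ∀ v ∈ X, R u u' → ¬ R u v → c u v = c u' v

variable {c : V → V → K} {X S : Finset V} {i j : K} {R : V → V → Prop}

lemma Part.mono (h : Part c X i j R) (hS : S ⊆ X) : Part c S i j R :=
  ⟨h.refl, h.symm, h.trans, fun u hu v hv => h.cross u (hS hu) v (hS hv),
    fun u hu u' hu' v hv => h.mod u (hS hu) u' (hS hu') v (hS hv)⟩

lemma Part.swap (h : Part c X i j R) : Part c X j i R :=
  ⟨h.refl, h.symm, h.trans, fun u hu v hv hr => (h.cross u hu v hv hr).symm, h.mod⟩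

lemma part_rch (hg : Gal c) : Part c X i j (Rch c X i j) := by
  have hsym : Std.Symm (Stp c X i j) := ⟨fun u v h => ⟨h.2.1, h.1, by rw [hg.1]; exact h.2.2.1,
    by rw [hg.1]; exact h.2.2.2⟩⟩
  have hcross : ∀ u ∈ X, ∀ v ∈ X, ¬ Rch c X i j u v → c u v = i ∨ c u v = j := by
    intro u hu v hv h
    by_contra hh
    push Not at hh
    exact h (Relation.ReflTransGen.single ⟨hu, hv, hh.1, hh.2⟩)
  refine ⟨fun u => Relation.ReflTransGen.refl, fun {u v} h => (Relation.ReflTransGen.stdSymm (r := Stp c X i j)).symm _ _ h,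
    fun {u v w} h1 h2 => Relation.ReflTransGen.trans h1 h2, hcross, ?_⟩
  intro u hu u' hu' v hv hr hn
  induction hr with
  | refl => rfl
  | @tail b d hb hbd ih =>
    have hb' : ¬ Rch c X i j b v := fun h => hn (Relation.ReflTransGen.trans hb h)
    have hd' : ¬ Rch c X i j d v := fun h => hn (Relation.ReflTransGen.trans (hb.tail hbd) h)
    rw [ih hbd.1]
    have hbv : b ≠ v := fun h => hb' (h ▸ Relation.ReflTransGen.refl)
    have hdv : d ≠ v := fun h => hd' (h ▸ Relation.ReflTransGen.refl)
    by_cases hbdn : b = d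
    · rw [hbdn]
    have h1 := hcross b hbd.1 v hv hb'
    have h2 := hcross d hu' v hv hd'
    obtain ⟨-, -, h3, h4⟩ := hbd
    rcases hg.2 b d v hbdn hbv hdv with h | h | h
    · rcases h1 with h1 | h1 <;> simp_all
    · rcases h2 with h2 | h2 <;> simp_all
    · exact h

lemma gallai [Nontrivial K] (hg : Gal c) (X : Finset V) (hX : 2 ≤ X.card) :
    ∃ i j : K, i ≠ j ∧ ∃ u ∈ X, ∃ v ∈ X, ¬ Rch c X i j u v := by
  induction X using Finset.induction_on with
  | empty => simp at hX
  | @insert v Y hvY ih =>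
    rw [Finset.card_insert_of_notMem hvY] at hX
    by_cases hY : 2 ≤ Y.card
    swap
    · obtain ⟨u, hu⟩ := Finset.card_eq_one.1 (by omega : Y.card = 1)
      subst hu
      obtain ⟨j, hj⟩ := exists_ne (c v u)
      have hvu : v ≠ u := by simpa using hvY
      refine ⟨c v u, j, hj.symm, v, by simp, u, by simp, ?_⟩
      intro h
      have : ∀ w, Rch c {v, u} (c v u) j v w → w = v := by
        intro w hw
        induction hw with
        | refl => rfl
        | @tail b d hb hbd ih =>
          subst ih
          obtain ⟨h1, h2, h3, h4⟩ := hbd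
          simp at h2
          rcases h2 with rfl | rfl
          · rfl
          · exact absurd rfl h3
      exact hvu (this u h).symm
    obtain ⟨i, j, hij, u, hu, w, hw, huw⟩ := ih hY
    have P := part_rch (X := Y) (i := i) (j := j) hg
    by_cases hy : ∃ y ∈ Y, ∀ y' ∈ Y, Rch c Y i j y y' → c v y' = i ∨ c v y' = j
    · obtain ⟨y, hyY, hy⟩ := hy
      refine ⟨i, j, hij, y, by simp [hyY], v, by simp, ?_⟩
      have key : ∀ z, Rch c (insert v Y) i j y z → z ∈ Y ∧ Rch c Y i j y z := by
        intro z hz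
        induction hz with
        | refl => exact ⟨hyY, Relation.ReflTransGen.refl⟩
        | @tail b d hb hbd ih =>
          obtain ⟨h1, h2, h3, h4⟩ := hbd
          rcases Finset.mem_insert.1 h2 with rfl | h2
          · rcases hy b ih.1 ih.2 with h | h
            · exact absurd (by rw [hg.1]; exact h) h3
            · exact absurd (by rw [hg.1]; exact h) h4
          · exact ⟨h2, ih.2.tail ⟨ih.1, h2, h3, h4⟩⟩
      intro h
      exact hvY (key v h).1
    · push Not at hy
      have hne : ∀ y ∈ Y, v ≠ y := fun y hy h => hvY (h ▸ hy)
      have hrn : ∀ {a b}, ¬ Rch c Y i j a b → a ≠ b := fun h hab => h (hab ▸ P.refl _)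
      obtain ⟨u', hu', ruu, hu1, hu2⟩ := hy u hu
      obtain ⟨w', hw', rww, hw1, hw2⟩ := hy w hw
      have huw' : ¬ Rch c Y i j u' w' := fun h => huw (P.trans (P.trans ruu h) (P.symm rww))
      -- two outside-coloured edges to different blocks agree
      have agree : ∀ a ∈ Y, ∀ b ∈ Y, ¬ Rch c Y i j a b → c v a ≠ i → c v a ≠ j → c v b ≠ i →
          c v b ≠ j → c v a = c v b := by
        intro a ha b hb hab h1 h2 h3 h4
        have := P.cross a ha b hb hab
        rcases hg.2 v a b (hne a ha) (hne b hb) (hrn hab) with h | h | h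
        · exact h
        · rcases this with t | t <;> simp_all
        · rcases this with t | t <;> simp_all
      obtain ⟨d, hd⟩ : ∃ d, d = c v u' := ⟨_, rfl⟩
      have hdw : c v w' = d := by rw [hd]; exact (agree u' hu' w' hw' huw' hu1 hu2 hw1 hw2).symm
      have hdi : d ≠ i := hd ▸ hu1
      have hdj : d ≠ j := hd ▸ hu2
      have away : ∀ a, ∃ z ∈ Y, c v z = d ∧ ¬ Rch c Y i j a z := by
        intro a
        by_cases h : Rch c Y i j a u'
        · exact ⟨w', hw', hdw, fun h' => huw' (P.trans (P.symm h) h')⟩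
        · exact ⟨u', hu', hd.symm, h⟩
      have cols : ∀ a ∈ Y, c v a = i ∨ c v a = j ∨ c v a = d := by
        intro a ha
        by_contra hh
        push Not at hh
        obtain ⟨z, hz, hzd, haz⟩ := away a
        exact hh.2.2 (by rw [← hzd]; exact agree a ha z hz haz hh.1 hh.2.1 (hzd ▸ hdi) (hzd ▸ hdj))
      -- an i (j) coloured edge forces
      have force : ∀ a ∈ Y, ∀ z ∈ Y, ¬ Rch c Y i j a z → c v z = d → (c v a = i ∨ c v a = j) →
          c a z = c v a := by
        intro a ha z hz haz hzd hva
        have := P.cross a ha z hz haz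
        rcases hg.2 v a z (hne a ha) (hne z hz) (hrn haz) with h | h | h
        · rcases hva with t | t <;> simp_all
        · exact h.symm
        · rcases this with t | t <;> simp_all
      have nob : ¬ ((∃ a ∈ Y, c v a = i) ∧ (∃ b ∈ Y, c v b = j)) := by
        rintro ⟨⟨a, ha, hai⟩, b, hb, hbj⟩
        by_cases hab : Rch c Y i j a b
        · obtain ⟨z, hz, hzd, haz⟩ := away a
          have hbz : ¬ Rch c Y i j b z := fun h => haz (P.trans hab h)
          have e1 := force a ha z hz haz hzd (Or.inl hai)
          have e2 := force b hb z hz hbz hzd (Or.inr hbj)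
          have e3 := P.mod a ha b hb z hz hab haz
          apply hij; rw [← hai, ← hbj, ← e1, ← e2, e3]
        · obtain ⟨a', ha', raa, h1, h2⟩ := hy a ha
          obtain ⟨b', hb', rbb, h3, h4⟩ := hy b hb
          have had : c v a' = d := by rcases cols a' ha' with t | t | t <;> simp_all
          have hbd : c v b' = d := by rcases cols b' hb' with t | t | t <;> simp_all
          have n1 : ¬ Rch c Y i j a b' := fun h => hab (P.trans h (P.symm rbb))
          have n2 : ¬ Rch c Y i j b a' := fun h => hab (P.trans raa (P.symm h))
          have e1 := force a ha b' hb' n1 hbd (Or.inl hai)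
          have e2 := force b hb a' ha' n2 had (Or.inr hbj)
          have n3 : ¬ Rch c Y i j b a := fun h => hab (P.symm h)
          have e3 := P.mod b hb b' hb' a ha rbb n3
          have e4 := P.mod a ha a' ha' b hb raa hab
          apply hij; rw [← hai, ← hbj, ← e1, ← e2, hg.1 a b', ← e3, hg.1 b a, e4, hg.1]
      have fin : ∀ e, (∀ a ∈ Y, c v a = d ∨ c v a = e) → ¬ Rch c (insert v Y) d e v u := by
        intro e he h
        have : ∀ z, Rch c (insert v Y) d e v z → z = v := by
          intro z hz
          induction hz with
          | refl => rfl
          | @tail b q hb hbd ih =>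
            subst ih
            obtain ⟨h1, h2, h3, h4⟩ := hbd
            rcases Finset.mem_insert.1 h2 with rfl | h2
            · rfl
            · rcases he q h2 with t | t
              · exact absurd t h3
              · exact absurd t h4
        exact hne u hu (this u h).symm
      by_cases hi : ∃ a ∈ Y, c v a = i
      · refine ⟨d, i, hdi, v, by simp, u, by simp [hu], fin i ?_⟩
        intro a ha
        rcases cols a ha with t | t | t
        · exact Or.inr t
        · exact absurd ⟨hi, a, ha, t⟩ nob
        · exact Or.inl t
      · refine ⟨d, j, hdj, v, by simp, u, by simp [hu], fin j ?_⟩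
        intro a ha
        rcases cols a ha with t | t | t
        · exact absurd ⟨a, ha, t⟩ hi
        · exact Or.inr t
        · exact Or.inl t

end GRX


namespace GRX
open Classical Finset

variable {V K : Type}

def Two (c : V → V → K) (S : Finset V) (i j : K) : Prop :=
  ∀ u ∈ S, ∀ v ∈ S, u ≠ v → c u v = i ∨ c u v = j

noncomputable def nb (c : V → V → K) (S : Finset V) (v : V) (i : K) : Finset V :=
  S.filter (fun u => u ≠ v ∧ c v u = i)

variable {c : V → V → K} {X S : Finset V} {i j : K} {l : K → ℕ}

lemma Two.mono {T : Finset V} (h : Two c S i j) (hT : T ⊆ S) : Two c T i j :=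
  fun u hu v hv => h u (hT hu) v (hT hv)

lemma Two.swap (h : Two c S i j) : Two c S j i :=
  fun u hu v hv huv => (h u hu v hv huv).symm

lemma mem_nb {u v : V} : u ∈ nb c S v i ↔ u ∈ S ∧ u ≠ v ∧ c v u = i := by simp [nb]

lemma nb_sub (v : V) : nb c S v i ⊆ S := Finset.filter_subset _ _

lemma two_split (h2 : Two c S i j) (hij : i ≠ j) {v : V} (hv : v ∈ S) (f : V → ℕ) :
    ∑ u ∈ S, f u = f v + ∑ u ∈ nb c S v i, f u + ∑ u ∈ nb c S v j, f u := by
  rw [← Finset.add_sum_erase S f hv, add_assoc, ← Finset.sum_union]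
  · congr 2
    ext u
    simp only [Finset.mem_erase, Finset.mem_union, mem_nb]
    constructor
    · rintro ⟨h1, h3⟩
      rcases h2 v hv u h3 h1.symm with h | h
      · exact Or.inl ⟨h3, h1, h⟩
      · exact Or.inr ⟨h3, h1, h⟩
    · rintro (h | h) <;> exact ⟨h.2.1, h.1⟩
  · rw [Finset.disjoint_left]
    intro u hu hu'
    exact hij ((mem_nb.1 hu).2.2.symm.trans (mem_nb.1 hu').2.2)

lemma nb_adm (hs : ∀ u v, c u v = c v u) (hF : ∀ p, Fr c S p (l p)) {v : V} (hv : v ∈ S)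
    {a : ℕ} (ha : l i = a + 1) (p : K) :
    AdC c S (nb c S v i) p (l p) (Function.update l i a p) := by
  by_cases hp : p = i
  · subst hp
    rw [Function.update_self]
    refine adm_of_join (A := {v}) (a := 1) hs (by simpa using hv) (nb_sub v) ?_
      (HasCl.one (by simp)) (hF p) (by omega)
    intro x hx y hy
    simp at hx; subst hx
    exact ⟨(mem_nb.1 hy).2.1.symm, (mem_nb.1 hy).2.2⟩
  · rw [Function.update_of_ne hp]
    exact AdC.refl (hF p) (nb_sub v)

lemma T_one (hg : Gal c) {a : ℕ} (ha : 1 ≤ a) (hi : l i = a) (hj : l j = 1) :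
    ∀ n, ∀ S : Finset V, S.card = n → Two c S i j → (∀ p, Fr c S p (l p)) → W c S l ≤ 2 * a := by
  intro n
  induction n with
  | zero => intro S hS _ _; rw [Finset.card_eq_zero] at hS; subst hS; simp [W]
  | succ n ih =>
    intro S hS h2 hF
    by_cases he : ∃ u ∈ S, ∃ v ∈ S, u ≠ v ∧ c u v = j
    · obtain ⟨u, hu, v, hv, huv, hc⟩ := he
      refine (W_erase hg hF hu hv huv (by rw [hc, hj])).trans (ih _ ?_ (h2.mono (Finset.erase_subset _ _))
        fun p => (hF p).mono (Finset.erase_subset _ _))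
      rw [Finset.card_erase_of_mem hv, hS]; rfl
    · push Not at he
      have hcl : Cl c i S := by
        intro u hu v hv huv
        rcases h2 u hu v hv huv with h | h
        · exact h
        · exact absurd h (he u hu v hv huv)
      have hW : W c S l ≤ 2 * S.card := by
        unfold W
        calc _ ≤ ∑ _v ∈ S, 2 := Finset.sum_le_sum fun v _ => wt_le_two v
          _ = _ := by simp [mul_comm]
      by_cases h1 : S.card ≤ a
      · omega
      by_cases h3 : S.card = a + 1
      · have : W c S l = S.card := by
          unfold W
          rw [Finset.card_eq_sum_ones]
          exact Finset.sum_congr rfl fun v hv =>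
            wt_bad ⟨i, S, Finset.Subset.refl _, hcl, by omega, hv⟩
        omega
      · exfalso
        obtain ⟨Q, hQ, hQa⟩ := Finset.exists_subset_card_eq (by omega : a ≤ S.card)
        have : 1 < (S \ Q).card := by rw [Finset.card_sdiff_of_subset hQ]; omega
        obtain ⟨u, hu, v, hv, huv⟩ := Finset.one_lt_card.1 this
        rw [Finset.mem_sdiff] at hu hv
        have hFi := hF i
        rw [hi] at hFi
        exact huv (hFi Q hQ (hcl.mono hQ) hQa u hu.1 v hv.1 hu.2 hv.2
          (fun q hq => hcl u hu.1 q (hQ hq) (fun h => hu.2 (h ▸ hq)))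
          (fun q hq => hcl v hv.1 q (hQ hq) (fun h => hv.2 (h ▸ hq))))

lemma T22 (hg : Gal c) (hij : i ≠ j) (hi : l i = 2) (hj : l j = 2) (h2 : Two c S i j)
    (hF : ∀ p, Fr c S p (l p)) : W c S l ≤ 10 ∧ (W c S l = 10 → ∀ v ∈ S, wt c S l v = 2) := by
  have key : ∀ v ∈ S, W c S l ≤ wt c S l v + 4 + 4 := by
    intro v hv
    have A := nb_adm (i := i) (a := 1) hg.1 hF hv hi
    have B := nb_adm (i := j) (a := 1) hg.1 hF hv hj
    have e1 := T_one (i := j) (j := i) (a := 2) (l := Function.update l i 1) hg (by norm_num)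
      (by rw [Function.update_of_ne hij.symm, hj]) (by simp) _ _ rfl
      ((h2.mono (nb_sub v)).swap) (fun p => (A p).1)
    have e2 := T_one (i := i) (j := j) (a := 2) (l := Function.update l j 1) hg (by norm_num)
      (by rw [Function.update_of_ne hij, hi]) (by simp) _ _ rfl
      ((h2.mono (nb_sub v))) (fun p => (B p).1)
    have e3 := sum_le_W A
    have e4 := sum_le_W B
    have e5 := two_split h2 hij hv (wt c S l)
    unfold W at *
    omega
  constructor
  · rcases S.eq_empty_or_nonempty with rfl | ⟨v, hv⟩
    · simp [W]
    · have := key v hv; have := wt_le_two (c := c) (X := S) (l := l) v; omega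
  · intro h v hv
    have := key v hv; have := wt_le_two (c := c) (X := S) (l := l) v; omega

lemma parity [Fintype V] (hs : ∀ u v, c u v = c v u) (hS : S.card = 9)
    (hd : ∀ v ∈ S, (nb c S v i).card = 5) : False := by
  let G : SimpleGraph V :=
    { Adj := fun u v => u ∈ S ∧ v ∈ S ∧ u ≠ v ∧ c u v = i
      symm := ⟨fun u v h => ⟨h.2.1, h.1, h.2.2.1.symm, by rw [hs]; exact h.2.2.2⟩⟩
      loopless := ⟨fun u h => h.2.2.1 rfl⟩ }
  have h := G.sum_degrees_eq_twice_card_edges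
  have h1 : ∀ v, G.degree v = if v ∈ S then 5 else 0 := by
    intro v
    split_ifs with hv
    · rw [← hd v hv, ← SimpleGraph.card_neighborFinset_eq_degree]
      congr 1
      ext u
      simp only [SimpleGraph.mem_neighborFinset, mem_nb, G]
      constructor
      · rintro ⟨-, a, b, d⟩; exact ⟨a, b.symm, d⟩
      · rintro ⟨a, b, d⟩; exact ⟨hv, a, b.symm, d⟩
    · rw [← SimpleGraph.card_neighborFinset_eq_degree, Finset.card_eq_zero]
      ext u
      simp only [SimpleGraph.mem_neighborFinset, G]
      simp [hv]
  rw [Finset.sum_congr rfl (fun v _ => h1 v)] at h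
  simp [hS] at h
  omega

lemma sum_le_two (T : Finset V) : ∑ v ∈ T, wt c S l v ≤ 2 * T.card := by
  calc _ ≤ ∑ _v ∈ T, 2 := Finset.sum_le_sum fun v _ => wt_le_two v
    _ = _ := by simp [mul_comm]

lemma T32 [Fintype V] (hg : Gal c) (hij : i ≠ j) (hi : l i = 3) (hj : l j = 2) (h2 : Two c S i j)
    (hl : ∀ p, 1 ≤ l p) (hF : ∀ p, Fr c S p (l p)) : W c S l ≤ 16 := by
  by_contra hW
  push Not at hW
  have A := fun v hv => nb_adm (i := i) (a := 2) (v := v) hg.1 hF hv hi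
  have B := fun v hv => nb_adm (i := j) (a := 1) (v := v) hg.1 hF hv hj
  have TA := fun v hv => T22 (l := Function.update l i 2) hg hij (by simp)
    (by rw [Function.update_of_ne hij.symm, hj])
    (h2.mono (nb_sub (i := i) v)) (fun p => (A v hv p).1)
  have TB := fun v hv => T_one (i := i) (j := j) (a := 3) (l := Function.update l j 1) hg (by norm_num)
      (by rw [Function.update_of_ne hij, hi]) (by simp) _ _ rfl
      ((h2.mono (nb_sub v))) (fun p => (B v hv p).1)
  have SA := fun v hv => (sum_le_W (A v hv)).trans (TA v hv).1
  have SB := fun v hv => (sum_le_W (B v hv)).trans (TB v hv)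
  have spl := fun v hv => two_split (v := v) h2 hij hv (wt c S l)
  -- equality in the i-neighbourhood
  have eqA : ∀ v ∈ S, ∑ u ∈ nb c S v i, wt c S l u = 10 →
      (∀ u ∈ nb c S v i, ¬ Bad c S l u) ∧
      (∀ u ∈ nb c S v i, ¬ Bad c (nb c S v i) (Function.update l i 2) u) := by
    intro v hv h10
    have h1 := sum_le_W (A v hv)
    have h3 := (TA v hv).1
    have h4 := (TA v hv).2 (by omega)
    constructor
    · intro u hu hb
      have hlt : ∑ u ∈ nb c S v i, wt c S l u < W c (nb c S v i) (Function.update l i 2) := by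
        unfold W
        refine Finset.sum_lt_sum (fun x _ => wt_le (A v hv) x) ⟨u, hu, ?_⟩
        rw [wt_bad hb, h4 u hu]; norm_num
      omega
    · intro u hu hb
      have := h4 u hu
      rw [wt_bad hb] at this
      omega
  by_cases hb : ∃ v ∈ S, Bad c S l v
  · -- bad vertices
    have bad10 : ∀ v ∈ S, Bad c S l v → ∑ u ∈ nb c S v i, wt c S l u = 10 ∧
        ∑ u ∈ nb c S v j, wt c S l u = 6 := by
      intro v hv hb
      have h1 := SA v hv
      have h3 := SB v hv
      have h4 := spl v hv
      rw [wt_bad hb] at h4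
      unfold W at hW
      omega
    obtain ⟨v, hv, hbv⟩ := hb
    obtain ⟨v10, v6⟩ := bad10 v hv hbv
    obtain ⟨vg, vl⟩ := eqA v hv v10
    -- no i-triangle in the i-neighbourhood of v
    have notri : ∀ Q ⊆ nb c S v i, Cl c i Q → Q.card ≤ 2 := by
      intro Q hQ hQc
      by_contra hh
      obtain ⟨Q', hQ', h3⟩ := Finset.exists_subset_card_eq (by omega : 3 ≤ Q.card)
      obtain ⟨x, hx⟩ := Finset.card_pos.1 (by omega : 0 < Q'.card)
      exact vl x (hQ (hQ' hx)) ⟨i, Q', hQ'.trans hQ, hQc.mono hQ', by simp [h3], hx⟩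
    obtain ⟨p, Q, hQ, hQc, hQm, hvQ⟩ := hbv
    have hpj : p = j := by
      by_contra hpj
      by_cases hpi : p = i
      · subst hpi
        have := notri (Q.erase v) (by
          intro x hx
          have hxQ := Finset.mem_of_mem_erase hx
          have hxv := Finset.ne_of_mem_erase hx
          exact mem_nb.2 ⟨hQ hxQ, hxv, hQc v hvQ x hxQ hxv.symm⟩) (hQc.mono (Finset.erase_subset _ _))
        rw [Finset.card_erase_of_mem hvQ] at this
        omega
      · have := hl p
        obtain ⟨w, hw, hwv⟩ := Finset.exists_mem_ne (by omega : 1 < Q.card) v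
        have h3 := hQc v hvQ w hw hwv.symm
        rcases h2 v hv w (hQ hw) hwv.symm with h | h
        · exact hpi (h3.symm.trans h)
        · exact hpj (h3.symm.trans h)
    subst hpj
    have hQ3 : (Q.erase v).card = 2 := by rw [Finset.card_erase_of_mem hvQ]; omega
    obtain ⟨y, z, hyz, hE⟩ := Finset.card_eq_two.1 hQ3
    have hyE : y ∈ Q.erase v := by rw [hE]; simp
    have hzE : z ∈ Q.erase v := by rw [hE]; simp
    have hyQ := Finset.mem_of_mem_erase hyE
    have hzQ := Finset.mem_of_mem_erase hzE
    have hyv := Finset.ne_of_mem_erase hyE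
    have hzv := Finset.ne_of_mem_erase hzE
    have hby : Bad c S l y := ⟨p, Q, hQ, hQc, hQm, hyQ⟩
    have hbz : Bad c S l z := ⟨p, Q, hQ, hQc, hQm, hzQ⟩
    obtain ⟨y10, -⟩ := bad10 y (hQ hyQ) hby
    obtain ⟨yg, -⟩ := eqA y (hQ hyQ) y10
    have hex : ∃ q ∈ nb c S v p, q ≠ y ∧ q ≠ z := by
      by_contra hh
      push Not at hh
      have hsub : nb c S v p ⊆ {y, z} := by
        intro q hq
        by_cases h : q = y
        · simp [h]
        · simp [hh q hq h]
      have : ∑ u ∈ nb c S v p, wt c S l u ≤ ∑ u ∈ ({y, z} : Finset V), wt c S l u :=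
        Finset.sum_le_sum_of_subset hsub
      rw [Finset.sum_pair hyz, wt_bad hby, wt_bad hbz] at this
      omega
    obtain ⟨q, hq, hqy, hqz⟩ := hex
    obtain ⟨hqS, hqv, hvq⟩ := mem_nb.1 hq
    have hyqi : c y q = i := by
      rcases h2 y (hQ hyQ) q hqS hqy.symm with h | h
      · exact h
      · exfalso
        have hFp := hF p
        rw [hj] at hFp
        have hc1 := hQc v hvQ y hyQ hyv.symm
        refine hqz (hFp {v, y} ?_ (Cl.pair hg.1 hc1) (Finset.card_pair hyv.symm) q hqS z (hQ hzQ)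
          (by simp [hqv, hqy]) (by simp [hzv, hyz.symm]) ?_ ?_)
        · intro x hx; simp at hx; rcases hx with rfl | rfl
          · exact hv
          · exact hQ hyQ
        · intro x hx; simp at hx; rcases hx with rfl | rfl
          · rw [hg.1]; exact hvq
          · rw [hg.1]; exact h
        · intro x hx; simp at hx; rcases hx with rfl | rfl
          · exact hQc z hzQ x hvQ hzv
          · exact hQc z hzQ x hyQ hyz.symm
    have hqg : ¬ Bad c S l q := yg q (mem_nb.2 ⟨hqS, hqy, hyqi⟩)
    have hqtri : ∀ a ∈ nb c S q p, ∀ b ∈ nb c S q p, a ≠ b → c a b ≠ p := by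
      intro a ha b hb hab hc
      obtain ⟨ha1, ha2, ha3⟩ := mem_nb.1 ha
      obtain ⟨hb1, hb2, hb3⟩ := mem_nb.1 hb
      refine hqg ⟨p, {q, a, b}, ?_, Cl.insert hg.1 (Cl.pair hg.1 hc) ?_, ?_, by simp⟩
      · intro x hx; simp at hx; rcases hx with rfl | rfl | rfl <;> assumption
      · intro x hx _; simp at hx; rcases hx with rfl | rfl <;> assumption
      · rw [hj]; exact Finset.card_eq_three.2 ⟨q, a, b, ha2.symm, hb2.symm, hab, rfl⟩
    have hvN : v ∈ nb c S q p := mem_nb.2 ⟨hv, hqv.symm, by rw [hg.1]; exact hvq⟩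
    have hcli : ∀ a ∈ nb c S q p, ∀ b ∈ nb c S q p, a ≠ b → c a b = i := by
      intro a ha b hb hab
      rcases h2 a (nb_sub _ ha) b (nb_sub _ hb) hab with h | h
      · exact h
      · exact absurd h (hqtri a ha b hb hab)
    have h5 := notri ((nb c S q p).erase v) (by
      intro x hx
      have hxN := Finset.mem_of_mem_erase hx
      have hxv := Finset.ne_of_mem_erase hx
      exact mem_nb.2 ⟨nb_sub _ hxN, hxv, hcli v hvN x hxN hxv.symm⟩)
      (fun a ha b hb hab => hcli a (Finset.mem_of_mem_erase ha) b (Finset.mem_of_mem_erase hb) hab)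
    have h6 : ∑ u ∈ nb c S q p, wt c S l u ≤ 5 := by
      rw [← Finset.add_sum_erase _ _ hvN, wt_bad ⟨p, Q, hQ, hQc, hQm, hvQ⟩]
      have := sum_le_two (c := c) (S := S) (l := l) ((nb c S q p).erase v)
      omega
    have h7 := spl q hqS
    have h8 := SA q hqS
    rw [wt_good hqg] at h7
    unfold W at hW
    have h9 : ∑ u ∈ nb c S q i, wt c S l u = 10 := by omega
    exact (eqA q hqS h9).1 y (mem_nb.2 ⟨hQ hyQ, hqy.symm, by rw [hg.1]; exact hyqi⟩) hby
  · push Not at hb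
    have sum2 : ∀ T ⊆ S, ∑ u ∈ T, wt c S l u = 2 * T.card := by
      intro T hT
      rw [Finset.sum_congr rfl (fun u hu => wt_good (hb u (hT hu)))]
      simp [mul_comm]
    have hWS : W c S l = 2 * S.card := sum2 S (Finset.Subset.refl _)
    have hcard : ∀ v ∈ S, S.card = 9 ∧ (nb c S v i).card = 5 := by
      intro v hv
      have h1 := spl v hv
      have h3 := SA v hv
      have h4 := SB v hv
      rw [sum2 _ (nb_sub v)] at h3 h4
      rw [sum2 S (Finset.Subset.refl _), sum2 _ (nb_sub v), sum2 _ (nb_sub v), wt_good (hb v hv)] at h1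
      omega
    obtain ⟨v, hv⟩ := Finset.card_pos.1 (by omega : 0 < S.card)
    exact parity hg.1 (hcard v hv).1 (fun v hv => (hcard v hv).2)

lemma T33 [Fintype V] (hg : Gal c) (hij : i ≠ j) (hi : l i = 3) (hj : l j = 3) (h2 : Two c S i j)
    (hl : ∀ p, 1 ≤ l p) (hF : ∀ p, Fr c S p (l p)) : W c S l ≤ 34 := by
  rcases S.eq_empty_or_nonempty with rfl | ⟨v, hv⟩
  · simp [W]
  have A := nb_adm (i := i) (a := 2) hg.1 hF hv hi
  have B := nb_adm (i := j) (a := 2) hg.1 hF hv hj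
  have hl' : ∀ q p, 1 ≤ Function.update l q 2 p := by
    intro q p
    by_cases h : p = q
    · subst h; simp
    · rw [Function.update_of_ne h]; exact hl p
  have e1 := T32 (i := j) (j := i) (l := Function.update l i 2) hg hij.symm
    (by rw [Function.update_of_ne hij.symm, hj]) (by simp)
    ((h2.mono (nb_sub v)).swap) (hl' i) (fun p => (A p).1)
  have e2 := T32 (i := i) (j := j) (l := Function.update l j 2) hg hij
    (by rw [Function.update_of_ne hij, hi]) (by simp)
    ((h2.mono (nb_sub v))) (hl' j) (fun p => (B p).1)
  have e3 := sum_le_W A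
  have e4 := sum_le_W B
  have e5 := two_split h2 hij hv (wt c S l)
  have := wt_le_two (c := c) (X := S) (l := l) v
  unfold W at *
  omega

end GRX


namespace GRX
open Classical Finset

variable {V K : Type}

section rep
variable {c : V → V → K} {X S : Finset V} {i j : K} {l : K → ℕ} {R : V → V → Prop}

lemma rep_bound (hP : Part c S i j R) (hF : ∀ p, Fr c S p (l p)) (g : ℚ)
    (hg1 : 1 ≤ g) (hB : ∀ v ∈ S, ((∑ u ∈ S.filter (R v), wt c S l u : ℕ) : ℚ) ≤ 2 * g) :
    ∃ T ⊆ S, Two c T i j ∧ ((W c S l : ℕ) : ℚ) ≤ g * (W c T l : ℕ) := by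
  let ρ : V → V := fun v => @Classical.epsilon V ⟨v⟩ (fun u => u ∈ S ∧ R v u)
  have hρ : ∀ v ∈ S, ρ v ∈ S ∧ R v (ρ v) := fun v hv =>
    @Classical.epsilon_spec V (fun u => u ∈ S ∧ R v u) ⟨v, hv, hP.refl v⟩
  have hρe : ∀ v w, R v w → ρ v = ρ w := by
    intro v w h
    have : (fun u => u ∈ S ∧ R v u) = (fun u => u ∈ S ∧ R w u) := by
      funext u
      apply propext
      exact ⟨fun h' => ⟨h'.1, hP.trans (hP.symm h) h'.2⟩, fun h' => ⟨h'.1, hP.trans h h'.2⟩⟩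
    simp only [ρ, this]
  have hTS : S.image ρ ⊆ S := by
    intro x hx
    obtain ⟨v, hv, rfl⟩ := Finset.mem_image.1 hx
    exact (hρ v hv).1
  have hfix : ∀ x ∈ S.image ρ, ρ x = x := by
    intro x hx
    obtain ⟨v, hv, rfl⟩ := Finset.mem_image.1 hx
    exact (hρe v _ (hρ v hv).2).symm
  have hnr : ∀ x ∈ S.image ρ, ∀ y ∈ S.image ρ, x ≠ y → ¬ R x y := by
    intro x hx y hy hxy h
    exact hxy (by rw [← hfix x hx, ← hfix y hy, hρe x y h])
  refine ⟨S.image ρ, hTS, ?_, ?_⟩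
  · intro u hu v hv huv
    exact hP.cross u (hTS hu) v (hTS hv) (hnr u hu v hv huv)
  · have hfib : ∀ x ∈ S.image ρ, S.filter (fun v => ρ v = x) = S.filter (R x) := by
      intro x hx
      ext v
      simp only [Finset.mem_filter]
      constructor
      · rintro ⟨hv, rfl⟩; exact ⟨hv, hP.symm (hρ v hv).2⟩
      · rintro ⟨hv, h⟩; exact ⟨hv, by rw [← hρe x v h, hfix x hx]⟩
    have hsum : W c S l = ∑ x ∈ S.image ρ, ∑ v ∈ S.filter (R x), wt c S l v := by
      unfold W
      rw [← Finset.sum_fiberwise_of_maps_to (fun v hv => Finset.mem_image_of_mem ρ hv)]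
      exact Finset.sum_congr rfl fun x hx => by rw [hfib x hx]
    rw [hsum]
    unfold W
    rw [Nat.cast_sum, Nat.cast_sum, Finset.mul_sum]
    refine Finset.sum_le_sum fun x hx => ?_
    by_cases hb : Bad c (S.image ρ) l x
    · rw [wt_bad hb]
      have hbS : Bad c S l x := by
        obtain ⟨p, hp⟩ := hb; exact ⟨p, hp.mono hTS⟩
      obtain ⟨p, Q, hQ, hQc, hQm, hxQ⟩ := hb
      have hone : S.filter (R x) = {x} := by
        ext w
        simp only [Finset.mem_filter, Finset.mem_singleton]
        constructor
        · rintro ⟨hw, hxw⟩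
          by_contra hne
          have hwT : w ∉ Q := fun h => hnr x hx w (hQ h) (Ne.symm hne) hxw
          refine hne (hF p (Q.erase x) ((Finset.erase_subset _ _).trans (hQ.trans hTS))
            (hQc.mono (Finset.erase_subset _ _)) (by rw [Finset.card_erase_of_mem hxQ]; omega) w hw x
            (hTS hx) (fun h => hwT (Finset.mem_of_mem_erase h)) (by simp) ?_ ?_)
          · intro q hq
            have hqQ := Finset.mem_of_mem_erase hq
            have hqx := Finset.ne_of_mem_erase hq
            rw [← hP.mod x (hTS hx) w hw q (hTS (hQ hqQ)) hxw (hnr x hx q (hQ hqQ) hqx.symm)]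
            exact hQc x hxQ q hqQ hqx.symm
          · intro q hq
            exact hQc x hxQ q (Finset.mem_of_mem_erase hq) (Finset.ne_of_mem_erase hq).symm
        · rintro rfl; exact ⟨hTS hx, hP.refl _⟩
      rw [hone, Finset.sum_singleton, wt_bad hbS]
      simpa using hg1
    · rw [wt_good hb]
      have := hB x (hTS hx)
      push_cast at this ⊢
      linarith

end rep

section values

noncomputable def f (s r : ℕ) : ℚ :=
  (if s % 2 = 0 then (if r % 2 = 0 then 1 else 17 / 5) else (if r % 2 = 0 then 2 else 8)) *
    (5 ^ (s / 2) * 17 ^ (r / 2))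

lemma f_vals (s r : ℕ) : ∃ t : ℚ, 1 ≤ t ∧
    f (s+2) r = 5 * f s r ∧ f s (r+2) = 17 * f s r ∧ f (s+1) (r+2) = 17 * f (s+1) r ∧
    ((f s r = t ∧ f (s+1) r = 2 * t ∧ f s (r+1) = 17/5 * t ∧ f (s+1) (r+1) = 8 * t) ∨
     (f s r = 2 * t ∧ f (s+1) r = 5 * t ∧ f s (r+1) = 8 * t ∧ f (s+1) (r+1) = 17 * t) ∨
     (f s r = 17/5 * t ∧ f (s+1) r = 8 * t ∧ f s (r+1) = 17 * t ∧ f (s+1) (r+1) = 34 * t) ∨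
     (f s r = 8 * t ∧ f (s+1) r = 17 * t ∧ f s (r+1) = 34 * t ∧ f (s+1) (r+1) = 85 * t)) := by
  refine ⟨5 ^ (s / 2) * 17 ^ (r / 2), ?_, ?_, ?_, ?_, ?_⟩
  · exact one_le_mul_of_one_le_of_one_le (one_le_pow₀ (by norm_num)) (one_le_pow₀ (by norm_num))
  · unfold f
    rw [show (s + 2) % 2 = s % 2 by omega, show (s + 2) / 2 = s / 2 + 1 by omega, pow_succ]; ring
  · unfold f
    rw [show (r + 2) % 2 = r % 2 by omega, show (r + 2) / 2 = r / 2 + 1 by omega, pow_succ]; ring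
  · unfold f
    rw [show (r + 2) % 2 = r % 2 by omega, show (r + 2) / 2 = r / 2 + 1 by omega, pow_succ]; ring
  · unfold f
    rcases Nat.even_or_odd' s with ⟨a, rfl | rfl⟩ <;> rcases Nat.even_or_odd' r with ⟨b, rfl | rfl⟩
    · left
      simp [Nat.add_div, show ∀ x : ℕ, 2 * x / 2 = x by omega, show ∀ x : ℕ, (2 * x + 1) / 2 = x by omega,
        show ∀ x : ℕ, (2 * x + 1) % 2 = 1 by omega]
    · right; right; left
      simp [show ∀ x : ℕ, 2 * x / 2 = x by omega, show ∀ x : ℕ, (2 * x + 1) / 2 = x by omega,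
        show ∀ x : ℕ, (2 * x + 1) % 2 = 1 by omega, show ∀ x : ℕ, (2 * x + 1 + 1) % 2 = 0 by omega,
        show ∀ x : ℕ, (2 * x + 1 + 1) / 2 = x + 1 by omega, pow_succ]
      constructor <;> ring
    · right; left
      simp [show ∀ x : ℕ, 2 * x / 2 = x by omega, show ∀ x : ℕ, (2 * x + 1) / 2 = x by omega,
        show ∀ x : ℕ, (2 * x + 1) % 2 = 1 by omega, show ∀ x : ℕ, (2 * x + 1 + 1) % 2 = 0 by omega,
        show ∀ x : ℕ, (2 * x + 1 + 1) / 2 = x + 1 by omega, pow_succ]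
      constructor <;> ring
    · right; right; right
      simp [show ∀ x : ℕ, 2 * x / 2 = x by omega, show ∀ x : ℕ, (2 * x + 1) / 2 = x by omega,
        show ∀ x : ℕ, (2 * x + 1) % 2 = 1 by omega, show ∀ x : ℕ, (2 * x + 1 + 1) % 2 = 0 by omega,
        show ∀ x : ℕ, (2 * x + 1 + 1) / 2 = x + 1 by omega, pow_succ]
      refine ⟨?_, ?_, ?_⟩ <;> ring

noncomputable def upd (l : K → ℕ) (i j : K) (a b : ℕ) : K → ℕ :=
  fun p => if p = i then a else if p = j then b else l p

lemma upd_self {l : K → ℕ} {i j : K} {a b : ℕ} (hi : l i = a) (hj : l j = b) :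
    upd l i j a b = l := by
  funext p; unfold upd; split_ifs with h1 h2
  · rw [h1, hi]
  · rw [h2, hj]
  · rfl

lemma upd_upd {l : K → ℕ} {i j : K} {a b a' b' : ℕ} :
    upd (upd l i j a b) i j a' b' = upd l i j a' b' := by
  funext p; unfold upd; split_ifs <;> rfl

lemma upd_swap {l : K → ℕ} {i j : K} (hij : i ≠ j) {a b : ℕ} :
    upd l i j a b = upd l j i b a := by
  funext p; unfold upd
  by_cases h1 : p = i <;> by_cases h2 : p = j
  · exact absurd (h1.symm.trans h2) hij
  all_goals simp [h1, h2]
  · intro h; exact absurd h hij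
  · intro h; exact absurd h.symm hij

@[simp] lemma upd_i {l : K → ℕ} {i j : K} {a b : ℕ} : upd l i j a b i = a := by simp [upd]

lemma upd_j {l : K → ℕ} {i j : K} (hij : i ≠ j) {a b : ℕ} : upd l i j a b j = b := by
  simp [upd, hij.symm]

lemma upd_ne {l : K → ℕ} {i j p : K} {a b : ℕ} (h1 : p ≠ i) (h2 : p ≠ j) :
    upd l i j a b p = l p := by simp [upd, h1, h2]

variable [Fintype K]

noncomputable def val (l : K → ℕ) : ℚ :=
  f (univ.filter (fun p => l p = 2)).card (univ.filter (fun p => l p = 3)).card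

lemma count_upd {l : K → ℕ} {i j : K} (hij : i ≠ j) {a b : ℕ} (x : ℕ) :
    (univ.filter (fun p => upd l i j a b p = x)).card =
      ((univ.erase i).erase j |>.filter (fun p => l p = x)).card +
        (if a = x then 1 else 0) + (if b = x then 1 else 0) := by
  rw [Finset.card_filter, Finset.card_filter, ← Finset.add_sum_erase univ _ (Finset.mem_univ i),
    ← Finset.add_sum_erase (univ.erase i) _ (Finset.mem_erase.2 ⟨hij.symm, Finset.mem_univ j⟩)]
  rw [upd_i, upd_j hij]
  have : ∑ p ∈ (univ.erase i).erase j, (if upd l i j a b p = x then 1 else 0) =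
      ∑ p ∈ (univ.erase i).erase j, (if l p = x then 1 else 0) := by
    refine Finset.sum_congr rfl fun p hp => ?_
    simp only [Finset.mem_erase] at hp
    rw [upd_ne hp.2.1 hp.1]
  rw [this]; ring

/-- all numerical inequalities used in the induction -/
structure Ineqs (G : ℕ → ℕ → ℚ) : Prop where
  s21 : G 1 2 = G 2 1
  s31 : G 1 3 = G 3 1
  s32 : G 2 3 = G 3 2
  h11 : 1 ≤ G 1 1
  h21 : 2 * G 1 1 ≤ G 2 1
  h22 : 2 * G 2 1 ≤ G 2 2
  h22' : 5 * G 1 1 ≤ G 2 2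
  h31 : G 2 1 + G 1 1 ≤ G 3 1
  h32 : G 2 2 + G 2 1 ≤ G 3 2
  h32a : 2 * G 3 1 ≤ G 3 2
  h32b : 8 * G 1 1 ≤ G 3 2
  h32c : 3 * G 2 1 + G 1 1 ≤ G 3 2
  h33 : G 3 2 + G 3 1 ≤ G 3 3
  h33a : 17 * G 1 1 ≤ G 3 3
  h33b : G 2 2 + 2 * (G 2 1 + G 1 1) ≤ G 3 3
  h33c : 2 * G 2 1 + G 1 1 + G 3 2 ≤ G 3 3

lemma ineqs (l : K → ℕ) {i j : K} (hij : i ≠ j) : Ineqs (fun a b => val (upd l i j a b)) := by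
  obtain ⟨s, hs⟩ : ∃ s, s = ((univ.erase i).erase j |>.filter (fun p => l p = 2)).card := ⟨_, rfl⟩
  obtain ⟨r, hr⟩ : ∃ r, r = ((univ.erase i).erase j |>.filter (fun p => l p = 3)).card := ⟨_, rfl⟩
  have hv : ∀ a b, val (upd l i j a b) = f (s + (if a = 2 then 1 else 0) + (if b = 2 then 1 else 0))
      (r + (if a = 3 then 1 else 0) + (if b = 3 then 1 else 0)) := by
    intro a b
    unfold val
    rw [count_upd hij, count_upd hij, hs, hr]
  obtain ⟨t, ht, e1, e2, e3, h⟩ := f_vals s r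
  simp only [Nat.add_assoc] at *
  constructor <;> simp only [hv] <;> norm_num <;> rcases h with h | h | h | h <;>
    obtain ⟨h1, h2, h3, h4⟩ := h <;> try simp only [e1, e2, e3, h1, h2, h3, h4] <;> linarith

end values

end GRX


namespace GRX
open Classical Finset

variable {V K : Type}

section main
variable [Fintype K] {c : V → V → K} {X S : Finset V} {i j : K} {l : K → ℕ} {R : V → V → Prop}

def IH (c : V → V → K) (n : ℕ) : Prop :=
  ∀ Y : Finset V, Y.card < n → ∀ l : K → ℕ, (∀ p, 1 ≤ l p ∧ l p ≤ 3) → (∀ p, Fr c Y p (l p)) →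
    ((W c Y l : ℕ) : ℚ) ≤ 2 * val l

noncomputable def GG (l : K → ℕ) (i j : K) (a b : ℕ) : ℚ := val (upd l i j a b)

lemma iG (l : K → ℕ) {i j : K} (hij : i ≠ j) : Ineqs (GG l i j) := ineqs l hij

lemma GG_swap (l : K → ℕ) {i j : K} (hij : i ≠ j) (a b : ℕ) : GG l j i a b = GG l i j b a := by
  unfold GG; rw [upd_swap hij.symm]

lemma GG_self (l : K → ℕ) {i j : K} {a b : ℕ} (hi : l i = a) (hj : l j = b) :
    GG l i j a b = val l := by
  unfold GG; rw [upd_self hi hj]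

lemma adm_upd {Y S : Finset V} (hij : i ≠ j) (hF : ∀ p, Fr c Y p (l p)) (hS : S ⊆ Y) {a b : ℕ}
    (Ai : AdC c Y S i (l i) a) (Aj : AdC c Y S j (l j) b) (p : K) :
    AdC c Y S p (l p) (upd l i j a b p) := by
  by_cases h1 : p = i
  · subst h1; rw [upd_i]; exact Ai
  · by_cases h2 : p = j
    · subst h2; rw [upd_j hij]; exact Aj
    · rw [upd_ne h1 h2]; exact AdC.refl (hF p) hS

lemma use_ih {n : ℕ} (H : IH c n) {Y S : Finset V} (hl : ∀ p, 1 ≤ l p ∧ l p ≤ 3)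
    (hF : ∀ p, Fr c Y p (l p)) (hS : S ⊆ Y) (hn : S.card < n) (hij : i ≠ j) {a b : ℕ}
    (ha : 1 ≤ a ∧ a ≤ 3) (hb : 1 ≤ b ∧ b ≤ 3)
    (Ai : AdC c Y S i (l i) a) (Aj : AdC c Y S j (l j) b) :
    ((∑ v ∈ S, wt c Y l v : ℕ) : ℚ) ≤ 2 * GG l i j a b := by
  have h := adm_upd hij hF hS Ai Aj
  refine le_trans ?_ (H S hn (upd l i j a b) ?_ (fun p => (h p).1))
  · exact_mod_cast sum_le_W h
  · intro p
    unfold upd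
    split_ifs
    · exact ha
    · exact hb
    · exact hl p

noncomputable def Bk (X : Finset V) (R : V → V → Prop) (v : V) : Finset V := X.filter (R v)
noncomputable def Nb (c : V → V → K) (X : Finset V) (R : V → V → Prop) (v : V) (i : K) : Finset V :=
  X.filter (fun u => ¬ R v u ∧ c v u = i)

lemma mem_Bk {u v : V} : u ∈ Bk X R v ↔ u ∈ X ∧ R v u := by simp [Bk]
lemma mem_Nb {u v : V} : u ∈ Nb c X R v i ↔ u ∈ X ∧ ¬ R v u ∧ c v u = i := by simp [Nb]
lemma Bk_sub {v : V} : Bk X R v ⊆ X := Finset.filter_subset _ _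
lemma Nb_sub {v : V} : Nb c X R v i ⊆ X := Finset.filter_subset _ _

lemma join_BN (hP : Part c X i j R) {v : V} (hv : v ∈ X) (p : K) :
    ∀ x ∈ Bk X R v, ∀ y ∈ Nb c X R v p, x ≠ y ∧ c x y = p := by
  intro x hx y hy
  rw [mem_Bk] at hx; rw [mem_Nb] at hy
  refine ⟨?_, ?_⟩
  · rintro rfl; exact hy.2.1 hx.2
  · rw [← hP.mod v hv x hx.1 y hy.1 hx.2 hy.2.1]; exact hy.2.2

lemma join_NB (hs : ∀ u v, c u v = c v u) (hP : Part c X i j R) {v : V} (hv : v ∈ X) (p : K) :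
    ∀ x ∈ Nb c X R v p, ∀ y ∈ Bk X R v, x ≠ y ∧ c x y = p := by
  intro x hx y hy
  have := join_BN hP hv p y hy x hx
  exact ⟨this.1.symm, by rw [hs]; exact this.2⟩

lemma W_split (hP : Part c X i j R) (hij : i ≠ j) {v : V} (hv : v ∈ X) (l : K → ℕ) :
    ((W c X l : ℕ) : ℚ) = ((∑ u ∈ Bk X R v, wt c X l u : ℕ) : ℚ) +
      ((∑ u ∈ Nb c X R v i, wt c X l u : ℕ) : ℚ) + ((∑ u ∈ Nb c X R v j, wt c X l u : ℕ) : ℚ) := by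
  have : W c X l = ∑ u ∈ Bk X R v, wt c X l u + ∑ u ∈ Nb c X R v i, wt c X l u
      + ∑ u ∈ Nb c X R v j, wt c X l u := by
    unfold W Bk Nb
    rw [Finset.sum_filter, Finset.sum_filter, Finset.sum_filter, ← Finset.sum_add_distrib,
      ← Finset.sum_add_distrib]
    refine Finset.sum_congr rfl fun u hu => ?_
    by_cases h : R v u
    · simp [h]
    · rcases hP.cross v hv u hu h with h' | h'
      · simp [h, h', hij]
      · simp [h, h', hij.symm]
  rw [this]; push_cast; ring

lemma card_Bk {v : V} {p : K} (h : (Nb c X R v p).Nonempty) : (Bk X R v).card < X.card := by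
  apply Finset.card_lt_card
  refine ⟨Bk_sub, fun h' => ?_⟩
  obtain ⟨u, hu⟩ := h
  rw [mem_Nb] at hu
  exact hu.2.1 (mem_Bk.1 (h' hu.1)).2

lemma card_Nb (hP : Part c X i j R) {v : V} (hv : v ∈ X) {p : K} :
    (Nb c X R v p).card < X.card := by
  apply Finset.card_lt_card
  exact ⟨Nb_sub, fun h' => (mem_Nb.1 (h' hv)).2.1 (hP.refl v)⟩

lemma adB (hs : ∀ u v, c u v = c v u) (hP : Part c X i j R) {v : V} (hv : v ∈ X) {p : K} {a : ℕ}
    (hF : ∀ p, Fr c X p (l p)) (h : (Nb c X R v p).Nonempty) (ha : 1 + a = l p) :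
    AdC c X (Bk X R v) p (l p) a :=
  adm_of_join hs Nb_sub Bk_sub (join_NB hs hP hv p) (HasCl.one h) (hF p) ha

lemma adN (hs : ∀ u v, c u v = c v u) (hP : Part c X i j R) {v : V} (hv : v ∈ X) {p : K} {a b : ℕ}
    (hF : ∀ p, Fr c X p (l p)) (h : HasCl c (Bk X R v) p a) (ha : a + b = l p) :
    AdC c X (Nb c X R v p) p (l p) b :=
  adm_of_join hs Bk_sub Nb_sub (join_BN hP hv p) h (hF p) ha

lemma Bk_one (hP : Part c X i j R) {v : V} (hv : v ∈ X) (p : K) : HasCl c (Bk X R v) p 1 :=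
  HasCl.one ⟨v, mem_Bk.2 ⟨hv, hP.refl v⟩⟩

lemma rf {p : K} {S : Finset V} (hF : ∀ p, Fr c X p (l p)) (hS : S ⊆ X) :
    AdC c X S p (l p) (l p) := AdC.refl (hF p) hS

/-- bipartition case -/
lemma bip (hg : Gal c) (H : IH c X.card) (hl : ∀ p, 1 ≤ l p ∧ l p ≤ 3) (hF : ∀ p, Fr c X p (l p))
    (hij : i ≠ j) (hP : Part c X i j R) {v : V} (hv : v ∈ X) (hi : 2 ≤ l i)
    (h1 : (Nb c X R v i).Nonempty) (h2 : Nb c X R v j = ∅) : ((W c X l : ℕ) : ℚ) ≤ 2 * val l := by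
  have I := iG l hij
  have hsp := W_split hP hij hv l
  rw [h2] at hsp
  simp only [Finset.sum_empty, Nat.cast_zero, add_zero] at hsp
  have cB := card_Bk h1
  have cN := card_Nb hP hv (p := i)
  rcases (show l i = 2 ∨ l i = 3 by have := (hl i).2; omega) with e | e
  · have b1 := use_ih H hl hF Bk_sub cB hij (a := 1) (by norm_num) (hl j)
      (adB hg.1 hP hv hF h1 (by omega)) (rf hF Bk_sub)
    have b2 := use_ih H hl hF Nb_sub cN hij (a := 1) (by norm_num) (hl j)
      (adN hg.1 hP hv hF (Bk_one hP hv i) (by omega)) (rf hF Nb_sub)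
    rw [hsp, ← GG_self l e rfl]
    have hj := hl j
    rcases (show l j = 1 ∨ l j = 2 ∨ l j = 3 by omega) with e' | e' | e' <;> rw [e'] at b1 b2 ⊢
    · linarith [I.h21]
    · linarith [I.h22, I.s21]
    · linarith [I.h32a, I.s31, I.s32]
  · have key : ((W c X l : ℕ) : ℚ) ≤ 2 * (GG l i j 2 (l j) + GG l i j 1 (l j)) := by
      by_cases hc : HasCl c (Bk X R v) i 2
      · have b1 := use_ih H hl hF Bk_sub cB hij (a := 2) (by norm_num) (hl j)
          (adB hg.1 hP hv hF h1 (by omega)) (rf hF Bk_sub)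
        have b2 := use_ih H hl hF Nb_sub cN hij (a := 1) (by norm_num) (hl j)
          (adN hg.1 hP hv hF hc (by omega)) (rf hF Nb_sub)
        linarith
      · have b1 := use_ih H hl hF Bk_sub cB hij (a := 1) (by norm_num) (hl j)
          (adm_of_no hg.1 hc) (rf hF Bk_sub)
        have b2 := use_ih H hl hF Nb_sub cN hij (a := 2) (by norm_num) (hl j)
          (adN hg.1 hP hv hF (Bk_one hP hv i) (by omega)) (rf hF Nb_sub)
        linarith
    refine key.trans ?_
    rw [← GG_self l e rfl]
    have hj := hl j
    rcases (show l j = 1 ∨ l j = 2 ∨ l j = 3 by omega) with e' | e' | e' <;> rw [e']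
    · linarith [I.h31]
    · linarith [I.h32, I.s21]
    · linarith [I.h33, I.s31, I.s32]

/-- refined bound for a neighbourhood of level one in colour `j` -/
lemma refined (hg : Gal c) (H : IH c X.card) (hl : ∀ p, 1 ≤ l p ∧ l p ≤ 3)
    (hF : ∀ p, Fr c X p (l p)) (hij : i ≠ j) (hP : Part c X i j R) {v : V} (hv : v ∈ X)
    (hi : l i = 3) (hne : ∀ u ∈ X, (Nb c X R u i).Nonempty)
    (hN : AdC c X (Nb c X R v j) j (l j) 1) :
    ((∑ u ∈ Nb c X R v j, wt c X l u : ℕ) : ℚ) ≤ 2 * (GG l i j 2 1 + GG l i j 1 1) := by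
  have I := iG l hij
  have cN := card_Nb hP hv (p := j)
  set N := Nb c X R v j with hNd
  have hNX : N ⊆ X := Nb_sub
  have Ai : AdC c X N i (l i) 3 := by
    have := rf (p := i) hF hNX; rwa [hi] at this ⊢
  by_cases hall : ∀ u ∈ N, ¬ HasCl c (Bk X R u) i 2
  · have A := adm_upd hij hF hNX Ai hN
    have h1 : ((∑ u ∈ N, wt c X l u : ℕ) : ℚ) ≤ (W c N (upd l i j 3 1) : ℕ) := by
      exact_mod_cast sum_le_W A
    have hF' : ∀ p, Fr c N p (upd l i j 3 1 p) := fun p => (A p).1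
    have hl' : ∀ p, 1 ≤ upd l i j 3 1 p ∧ upd l i j 3 1 p ≤ 3 := by
      intro p; unfold upd; split_ifs
      · norm_num
      · norm_num
      · exact hl p
    obtain ⟨T, hT, hT2, hW⟩ := rep_bound (hP.mono hNX) hF' (GG l i j 1 1) I.h11 (by
      intro u hu
      have hsub : N.filter (R u) ⊆ N := Finset.filter_subset _ _
      have := use_ih H hl' hF' hsub (lt_of_le_of_lt (Finset.card_le_card hsub) cN) hij
        (a := 1) (b := 1) (by norm_num) (by norm_num) (adm_of_no hg.1 (fun ⟨Q, hQ, hQ'⟩ =>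
          hall u hu ⟨Q, fun x hx => by
            have := hQ hx
            rw [Finset.mem_filter] at this
            exact mem_Bk.2 ⟨hNX this.1, this.2⟩, hQ'⟩))
        (by
          have := rf (p := j) hF' hsub
          rw [upd_j hij] at this ⊢; exact this)
      rw [GG, upd_upd] at this
      exact this)
    have h6 := T_one (i := i) (j := j) (a := 3) (l := upd l i j 3 1) hg (by norm_num) upd_i
      (upd_j hij) _ T rfl hT2 (fun p => (hF' p).mono hT)
    have h6' : ((W c T (upd l i j 3 1) : ℕ) : ℚ) ≤ 6 := by exact_mod_cast h6
    have : GG l i j 1 1 * ((W c T (upd l i j 3 1) : ℕ) : ℚ) ≤ GG l i j 1 1 * 6 :=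
      mul_le_mul_of_nonneg_left h6' (by linarith [I.h11])
    linarith [I.h21]
  · push Not at hall
    obtain ⟨u, hu, hcl⟩ := hall
    have huX := hNX hu
    have hu' := mem_Nb.1 hu
    have hPN : Bk X R u ⊆ N := by
      intro w hw
      rw [mem_Bk] at hw
      refine mem_Nb.2 ⟨hw.1, fun h => hu'.2.1 (hP.trans h (hP.symm hw.2)), ?_⟩
      rw [hg.1, ← hP.mod u huX w hw.1 v hv hw.2 (fun h => hu'.2.1 (hP.symm h)), hg.1]
      exact hu'.2.2
    have b1 := use_ih H hl hF Bk_sub (card_Bk (hne u huX)) hij (a := 2) (b := 1) (by norm_num)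
      (by norm_num) (adB hg.1 hP huX hF (hne u huX) (by omega)) (hN.trans (AdC.refl hN.1 hPN))
    have hD : N \ Bk X R u ⊆ N := Finset.sdiff_subset
    have hjoin : ∀ x ∈ Bk X R u, ∀ y ∈ N \ Bk X R u, x ≠ y ∧ c x y = i := by
      intro x hx y hy
      rw [Finset.mem_sdiff] at hy
      have hyX := hNX hy.1
      have hnR : ¬ R u y := fun h => hy.2 (mem_Bk.2 ⟨hyX, h⟩)
      refine ⟨fun h => hy.2 (h ▸ hx), ?_⟩
      have hx' := mem_Bk.1 hx
      rw [← hP.mod u huX x hx'.1 y hyX hx'.2 hnR]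
      rcases hP.cross u huX y hyX hnR with h | h
      · exact h
      · exfalso
        obtain ⟨a, ha, b, hb, hab⟩ := hcl.two_ne
        have aux : ∀ a ∈ Bk X R u, a ∉ ({y} : Finset V) ∧ ∀ q ∈ ({y} : Finset V), c a q = j := by
          intro a ha
          have ha' := mem_Bk.1 ha
          refine ⟨fun h' => hy.2 (by rw [Finset.mem_singleton] at h'; exact h' ▸ ha), ?_⟩
          intro q hq
          rw [Finset.mem_singleton] at hq
          rw [hq, ← hP.mod u huX a ha'.1 y hyX ha'.2 hnR, h]
        exact hab (hN.1 {y} (by simpa using hy.1) (Cl.single y) (by simp) a (hPN ha) b (hPN hb)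
          (aux a ha).1 (aux b hb).1 (aux a ha).2 (aux b hb).2)
    have b2 := use_ih H hl hF (hD.trans hNX) (lt_of_le_of_lt (Finset.card_le_card hD) cN) hij
      (a := 1) (b := 1) (by norm_num) (by norm_num)
      (adm_of_join hg.1 Bk_sub (hD.trans hNX) hjoin hcl (hF i) (by omega))
      (hN.trans (AdC.refl hN.1 hD))
    have := Finset.sum_sdiff (f := wt c X l) hPN
    rw [← this]
    push_cast at b1 b2 ⊢
    linarith

/-- final combination through representatives -/
lemma reps (H : IH c X.card) (hl : ∀ p, 1 ≤ l p ∧ l p ≤ 3) (hF : ∀ p, Fr c X p (l p)) (hij : i ≠ j)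
    (hP : Part c X i j R) (hne : ∀ u ∈ X, (Nb c X R u i).Nonempty)
    (hb : ∀ v ∈ X, AdC c X (Bk X R v) i (l i) 1 ∧ AdC c X (Bk X R v) j (l j) 1) (M : ℕ)
    (hT : ∀ T ⊆ X, Two c T i j → W c T l ≤ M) :
    ((W c X l : ℕ) : ℚ) ≤ M * GG l i j 1 1 := by
  have I := iG l hij
  obtain ⟨T, hTX, hT2, hW⟩ := rep_bound hP hF (GG l i j 1 1) I.h11 (by
    intro v hv
    exact use_ih H hl hF Bk_sub (card_Bk (hne v hv)) hij (by norm_num) (by norm_num)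
      (hb v hv).1 (hb v hv).2)
  have h6' : ((W c T l : ℕ) : ℚ) ≤ M := by exact_mod_cast hT T hTX hT2
  have : GG l i j 1 1 * ((W c T l : ℕ) : ℚ) ≤ GG l i j 1 1 * M :=
    mul_le_mul_of_nonneg_left h6' (by linarith [I.h11])
  linarith

variable [Fintype V]

lemma prime22 (hg : Gal c) (H : IH c X.card) (hl : ∀ p, 1 ≤ l p ∧ l p ≤ 3)
    (hF : ∀ p, Fr c X p (l p)) (hij : i ≠ j) (hP : Part c X i j R)
    (hni : ∀ u ∈ X, (Nb c X R u i).Nonempty) (hnj : ∀ u ∈ X, (Nb c X R u j).Nonempty)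
    (hi : l i = 2) (hj : l j = 2) : ((W c X l : ℕ) : ℚ) ≤ 2 * val l := by
  have I := iG l hij
  have := reps H hl hF hij hP hni (fun v hv => ⟨adB hg.1 hP hv hF (hni v hv) (by omega),
    adB hg.1 hP hv hF (hnj v hv) (by omega)⟩) 10 (fun T hT h2 =>
      (T22 hg hij hi hj h2 (fun p => (hF p).mono hT)).1)
  rw [← GG_self l hi hj]
  push_cast at this
  linarith [I.h22']

lemma prime32 (hg : Gal c) (H : IH c X.card) (hl : ∀ p, 1 ≤ l p ∧ l p ≤ 3)
    (hF : ∀ p, Fr c X p (l p)) (hij : i ≠ j) (hP : Part c X i j R)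
    (hni : ∀ u ∈ X, (Nb c X R u i).Nonempty) (hnj : ∀ u ∈ X, (Nb c X R u j).Nonempty)
    (hi : l i = 3) (hj : l j = 2) : ((W c X l : ℕ) : ℚ) ≤ 2 * val l := by
  have I := iG l hij
  rw [← GG_self l hi hj]
  by_cases hall : ∀ v ∈ X, ¬ HasCl c (Bk X R v) i 2
  · have := reps H hl hF hij hP hni (fun v hv => ⟨adm_of_no hg.1 (hall v hv),
      adB hg.1 hP hv hF (hnj v hv) (by omega)⟩) 16 (fun T hT h2 =>
        (T32 hg hij hi hj h2 (fun p => (hl p).1) (fun p => (hF p).mono hT)))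
    push_cast at this
    linarith [I.h32b]
  · push Not at hall
    obtain ⟨v, hv, hcl⟩ := hall
    have b0 := W_split hP hij hv l
    have b1 := use_ih H hl hF Bk_sub (card_Bk (hni v hv)) hij (a := 2) (b := 1) (by norm_num)
      (by norm_num) (adB hg.1 hP hv hF (hni v hv) (by omega)) (adB hg.1 hP hv hF (hnj v hv) (by omega))
    have b2 := use_ih H hl hF Nb_sub (card_Nb hP hv) hij (a := 1) (b := l j) (by norm_num)
      (hl j) (adN hg.1 hP hv hF hcl (by omega)) (rf hF Nb_sub)
    have b3 := refined hg H hl hF hij hP hv hi hni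
      (adN hg.1 hP hv hF (Bk_one hP hv j) (by omega))
    rw [hj] at b2
    linarith [I.h32c, I.s21]

lemma prime33a (hg : Gal c) (H : IH c X.card) (hl : ∀ p, 1 ≤ l p ∧ l p ≤ 3)
    (hF : ∀ p, Fr c X p (l p)) (hij : i ≠ j) (hP : Part c X i j R)
    (hni : ∀ u ∈ X, (Nb c X R u i).Nonempty) (hnj : ∀ u ∈ X, (Nb c X R u j).Nonempty)
    (hi : l i = 3) (hj : l j = 3) {v : V} (hv : v ∈ X) (hcl : HasCl c (Bk X R v) i 2) :
    ((W c X l : ℕ) : ℚ) ≤ 2 * val l := by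
  have I := iG l hij
  rw [← GG_self l hi hj]
  have b0 := W_split hP hij hv l
  have b2 := refined hg H hl hF hij.symm hP.swap hv hj hnj
      (adN hg.1 hP hv hF hcl (by omega))
  rw [GG_swap l hij, GG_swap l hij] at b2
  by_cases hcj : HasCl c (Bk X R v) j 2
  · have b1 := use_ih H hl hF Bk_sub (card_Bk (hni v hv)) hij (a := 2) (b := 2) (by norm_num)
      (by norm_num) (adB hg.1 hP hv hF (hni v hv) (by omega)) (adB hg.1 hP hv hF (hnj v hv) (by omega))
    have b3 := refined hg H hl hF hij hP hv hi hni
      (adN hg.1 hP hv hF hcj (by omega))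
    linarith [I.h33b, I.s21]
  · have b1 := use_ih H hl hF Bk_sub (card_Bk (hni v hv)) hij (a := 2) (b := 1) (by norm_num)
      (by norm_num) (adB hg.1 hP hv hF (hni v hv) (by omega)) (adm_of_no hg.1 hcj)
    have b3 := use_ih H hl hF Nb_sub (card_Nb hP hv) hij (a := l i) (b := 2) (hl i) (by norm_num)
      (rf hF Nb_sub) (adN hg.1 hP hv hF (Bk_one hP hv j) (by omega))
    rw [hi] at b3
    linarith [I.h33c, I.s21]

lemma prime33 (hg : Gal c) (H : IH c X.card) (hl : ∀ p, 1 ≤ l p ∧ l p ≤ 3)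
    (hF : ∀ p, Fr c X p (l p)) (hij : i ≠ j) (hP : Part c X i j R)
    (hni : ∀ u ∈ X, (Nb c X R u i).Nonempty) (hnj : ∀ u ∈ X, (Nb c X R u j).Nonempty)
    (hi : l i = 3) (hj : l j = 3) : ((W c X l : ℕ) : ℚ) ≤ 2 * val l := by
  have I := iG l hij
  by_cases h1 : ∃ v ∈ X, HasCl c (Bk X R v) i 2
  · obtain ⟨v, hv, h⟩ := h1
    exact prime33a hg H hl hF hij hP hni hnj hi hj hv h
  by_cases h2 : ∃ v ∈ X, HasCl c (Bk X R v) j 2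
  · obtain ⟨v, hv, h⟩ := h2
    exact prime33a hg H hl hF hij.symm hP.swap hnj hni hj hi hv h
  push Not at h1 h2
  have := reps H hl hF hij hP hni (fun v hv => ⟨adm_of_no hg.1 (h1 v hv),
      adm_of_no hg.1 (h2 v hv)⟩) 34 (fun T hT h2 =>
        (T33 hg hij hi hj h2 (fun p => (hl p).1) (fun p => (hF p).mono hT)))
  rw [← GG_self l hi hj]
  push_cast at this
  linarith [I.h33a]

lemma one_le_val [Nontrivial K] (hl : ∀ p, 1 ≤ l p ∧ l p ≤ 3) : 1 ≤ val l := by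
  obtain ⟨i, j, hij⟩ := exists_pair_ne K
  have I := iG l hij
  rw [← GG_self l (i := i) (j := j) rfl rfl]
  have hi := hl i
  have hj := hl j
  have := I.h11; have := I.h21; have := I.h31; have := I.h22'; have := I.h32b; have := I.h33a
  have := I.s21; have := I.s31; have := I.s32
  rcases (show l i = 1 ∨ l i = 2 ∨ l i = 3 by omega) with e | e | e <;>
  rcases (show l j = 1 ∨ l j = 2 ∨ l j = 3 by omega) with e' | e' | e' <;> rw [e, e'] <;> linarith

theorem main_bound [Nontrivial K] (hg : Gal c) : ∀ n, IH c n := by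
  intro n
  induction n with
  | zero => intro Y hY; omega
  | succ n ih =>
    intro X hX l hl hF
    rcases Nat.lt_or_ge X.card n with h | h
    · exact ih X h l hl hF
    have hXn : X.card = n := by omega
    subst hXn
    by_cases hc : X.card ≤ 1
    · have h1 := one_le_val hl
      have : W c X l ≤ 2 * X.card := sum_le_two X
      have : ((W c X l : ℕ) : ℚ) ≤ 2 := by exact_mod_cast (by omega : W c X l ≤ 2)
      linarith
    push Not at hc
    by_cases he : ∃ u ∈ X, ∃ v ∈ X, u ≠ v ∧ l (c u v) = 1
    · obtain ⟨u, hu, v, hv, huv, h1⟩ := he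
      have e1 := W_erase hg hF hu hv huv h1
      have e2 := ih (X.erase v) (Finset.card_erase_lt_of_mem hv) l hl
        (fun p => (hF p).mono (Finset.erase_subset _ _))
      have : ((W c X l : ℕ) : ℚ) ≤ (W c (X.erase v) l : ℕ) := by exact_mod_cast e1
      linarith
    push Not at he
    obtain ⟨i, j, hij, u0, hu0, v0, hv0, hnr⟩ := gallai hg X hc
    have hP : Part c X i j (Rch c X i j) := part_rch hg
    generalize Rch c X i j = R at hP hnr
    have hex : ∀ v ∈ X, (Nb c X R v i).Nonempty ∨ (Nb c X R v j).Nonempty := by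
      intro v hv
      obtain ⟨w, hw, hvw⟩ : ∃ w ∈ X, ¬ R v w := by
        by_contra hcon
        push Not at hcon
        exact hnr (hP.trans (hP.symm (hcon u0 hu0)) (hcon v0 hv0))
      rcases hP.cross v hv w hw hvw with h | h
      · exact Or.inl ⟨w, mem_Nb.2 ⟨hw, hvw, h⟩⟩
      · exact Or.inr ⟨w, mem_Nb.2 ⟨hw, hvw, h⟩⟩
    have hlev : ∀ v ∈ X, ∀ p, (Nb c X R v p).Nonempty → 2 ≤ l p := by
      rintro v hv p ⟨w, hw⟩
      rw [mem_Nb] at hw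
      have := he v hv w hw.1 (by rintro rfl; exact hw.2.1 (hP.refl v))
      rw [hw.2.2] at this
      have := (hl p).1
      omega
    by_cases hbi : ∃ v ∈ X, Nb c X R v j = ∅
    · obtain ⟨v, hv, h⟩ := hbi
      have h1 := (hex v hv).resolve_right (by rw [h]; simp)
      exact bip hg ih hl hF hij hP hv (hlev v hv i h1) h1 h
    by_cases hbj : ∃ v ∈ X, Nb c X R v i = ∅
    · obtain ⟨v, hv, h⟩ := hbj
      have h1 := (hex v hv).resolve_left (by rw [h]; simp)
      exact bip hg ih hl hF hij.symm hP.swap hv (hlev v hv j h1) h1 h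
    push Not at hbi hbj
    have hni : ∀ u ∈ X, (Nb c X R u i).Nonempty := fun u hu => by
      simpa [Finset.nonempty_iff_ne_empty] using hbj u hu
    have hnj : ∀ u ∈ X, (Nb c X R u j).Nonempty := fun u hu => by
      simpa [Finset.nonempty_iff_ne_empty] using hbi u hu
    have l1 := hlev u0 hu0 i (hni u0 hu0)
    have l2 := hlev u0 hu0 j (hnj u0 hu0)
    have hi := hl i
    have hj := hl j
    rcases (show l i = 2 ∨ l i = 3 by omega) with e | e <;>
    rcases (show l j = 2 ∨ l j = 3 by omega) with e' | e'
    · exact prime22 hg ih hl hF hij hP hni hnj e e'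
    · exact prime32 hg ih hl hF hij.symm hP.swap hnj hni e' e
    · exact prime32 hg ih hl hF hij hP hni hnj e e'
    · exact prime33 hg ih hl hF hij hP hni hnj e e'

end main

end GRX


namespace GRX
open Classical Finset

section upper

def lv (k s r : ℕ) (i : Fin k) : ℕ := if (i : ℕ) < r then 3 else if (i : ℕ) < r + s then 2 else 1

lemma mix_H {k s r : ℕ} {i : Fin k} (h : (i : ℕ) < r) : mixPKH k s r i = ⟨Fin 5, GH3⟩ := by
  simp [mixPKH, h]
lemma mix_K {k s r : ℕ} {i : Fin k} (h : ¬ (i : ℕ) < r) (h' : (i : ℕ) < r + s) :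
    mixPKH k s r i = ⟨Fin 3, GK3⟩ := by
  simp [mixPKH, h, h']
lemma mix_P {k s r : ℕ} {i : Fin k} (h : ¬ (i : ℕ) < r) (h' : ¬ (i : ℕ) < r + s) :
    mixPKH k s r i = ⟨Fin 3, GP3⟩ := by
  simp [mixPKH, h, h']

lemma lv_fr {k s r n : ℕ} {c : Fin n → Fin n → Fin k} (hs : ∀ u v, c u v = c v u)
    (hno : ∀ i, ¬ HasMonoCopy (mixPKH k s r i).2 c i) (p : Fin k) :
    Fr c univ p (lv k s r p) := by
  intro Q _ hQ hm u _ v _ hu hv h1 h2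
  by_contra huv
  have := hno p
  unfold lv at hm
  by_cases h : (p : ℕ) < r
  · rw [mix_H h] at this
    rw [if_pos h] at hm
    obtain ⟨x, y, z, hxy, hxz, hyz, rfl⟩ := Finset.card_eq_three.1 hm
    simp only [Finset.mem_insert, Finset.mem_singleton, not_or] at hu hv
    have a1 := hQ x (by simp) y (by simp) hxy
    have a2 := hQ x (by simp) z (by simp) hxz
    have a3 := hQ y (by simp) z (by simp) hyz
    have b1 := h1 x (by simp); have b2 := h1 y (by simp); have b3 := h1 z (by simp)
    have d1 := h2 x (by simp); have d2 := h2 y (by simp); have d3 := h2 z (by simp)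
    have a1' := a1; have a2' := a2; have a3' := a3
    have b1' := b1; have b2' := b2; have b3' := b3
    have d1' := d1; have d2' := d2; have d3' := d3
    rw [hs] at a1' a2' a3' b1' b2' b3' d1' d2' d3'
    apply this
    refine ⟨![u, v, x, y, z], ?_, ?_⟩
    · intro a b hab
      fin_cases a <;> fin_cases b <;> simp at hab ⊢ <;>
        first | exact huv hab | exact huv hab.symm | exact hu.1 hab | exact hu.2.1 hab | exact hu.2.2 hab | exact hv.1 hab | exact hv.2.1 hab | exact hv.2.2 hab | exact hu.1 hab.symm | exact hu.2.1 hab.symm | exact hu.2.2 hab.symm | exact hv.1 hab.symm | exact hv.2.1 hab.symm | exact hv.2.2 hab.symm | exact hxy hab | exact hxz hab | exact hyz hab | exact hxy hab.symm | exact hxz hab.symm | exact hyz hab.symm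
    · intro a b hab
      fin_cases a <;> fin_cases b <;> simp [GH3] at hab ⊢ <;> assumption
  by_cases h' : (p : ℕ) < r + s
  · rw [mix_K h h'] at this
    rw [if_neg h, if_pos h'] at hm
    obtain ⟨x, y, hxy, rfl⟩ := Finset.card_eq_two.1 hm
    simp only [Finset.mem_insert, Finset.mem_singleton, not_or] at hu hv
    have a1 := hQ x (by simp) y (by simp) hxy
    have b1 := h1 x (by simp); have b2 := h1 y (by simp)
    have a1' := a1
    have b1' := b1; have b2' := b2
    rw [hs] at a1' b1' b2'
    apply this
    refine ⟨![u, x, y], ?_, ?_⟩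
    · intro a b hab
      fin_cases a <;> fin_cases b <;> simp at hab ⊢ <;>
        first | exact hu.1 hab | exact hu.2 hab | exact hu.1 hab.symm | exact hu.2 hab.symm | exact hxy hab | exact hxy hab.symm
    · intro a b hab
      fin_cases a <;> fin_cases b <;> simp [GK3] at hab ⊢ <;> assumption
  · rw [mix_P h h'] at this
    rw [if_neg h, if_neg h'] at hm
    obtain ⟨x, rfl⟩ := Finset.card_eq_one.1 hm
    simp only [Finset.mem_singleton] at hu hv
    have b1 := h1 x (by simp); have b2 := h2 x (by simp)
    have b1' := b1; have b2' := b2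
    rw [hs] at b1' b2'
    apply this
    refine ⟨![u, x, v], ?_, ?_⟩
    · intro a b hab
      fin_cases a <;> fin_cases b <;> simp at hab ⊢ <;>
        first | exact hu hab | exact hv hab | exact hu hab.symm | exact hv hab.symm | exact huv hab | exact huv hab.symm
    · intro a b hab
      fin_cases a <;> fin_cases b <;> simp [GP3] at hab ⊢ <;> assumption

lemma card_lv {k s r x : ℕ} {a b : ℕ} (hb : b ≤ k) (h : ∀ i : Fin k, lv k s r i = x ↔ a ≤ (i : ℕ) ∧ (i : ℕ) < b) :
    (univ.filter (fun p : Fin k => lv k s r p = x)).card = b - a := by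
  rw [← Nat.card_Ico, ← Finset.card_map Fin.valEmbedding]
  congr 1
  ext y
  simp only [Finset.mem_map, Finset.mem_filter, Finset.mem_univ, true_and, Fin.valEmbedding_apply,
    Finset.mem_Ico, h]
  constructor
  · rintro ⟨i, hi, rfl⟩; exact hi
  · intro hy; exact ⟨⟨y, by omega⟩, hy, rfl⟩

lemma val_lv {k s r : ℕ} (h : s + r < k) : val (lv k s r) = f s r := by
  unfold val
  rw [card_lv (a := r) (b := r + s) (by omega), card_lv (a := 0) (b := r) (by omega)]
  · simp
  · intro i; unfold lv; split_ifs <;> omega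
  · intro i; unfold lv; split_ifs <;> omega

/-- removing one vertex of each level-one edge -/
lemma card_le_W {n : ℕ} {K : Type} {c : Fin n → Fin n → K} {l : K → ℕ} (hg : Gal c)
    (hF : ∀ p, Fr c univ p (l p)) : ∃ Y : Finset (Fin n), n ≤ W c Y l := by
  have tw : ∀ u v w : Fin n, l (c u v) = 1 → u ≠ v → w ≠ u → w ≠ v → c u w = c v w ∧ c u w ≠ c u v := by
    intro u v w h huv hwu hwv
    have := hF (c u v)
    rw [h] at this
    exact twin hg this (mem_univ _) (mem_univ _) (mem_univ _) huv hwu hwv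
  let P : Fin n → Prop := fun v => ∃ u, u < v ∧ l (c u v) = 1
  let Y : Finset (Fin n) := univ.filter (fun v => ¬ P v)
  let D : Finset (Fin n) := univ.filter P
  refine ⟨Y, ?_⟩
  have hcard : D.card + Y.card = n := by
    have := Finset.card_filter_add_card_filter_not (s := (univ : Finset (Fin n))) P
    simpa using this
  have hD : D.card ≤ (Y.filter (fun v => ¬ Bad c Y l v)).card := by
    have hch : ∀ v, ∃ u, P v → u < v ∧ l (c u v) = 1 := by
      intro v
      by_cases h : P v
      · obtain ⟨u, hu⟩ := h; exact ⟨u, fun _ => hu⟩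
      · exact ⟨v, fun h' => absurd h' h⟩
    choose g hgg using hch
    refine Finset.card_le_card_of_injOn g ?_ ?_
    · intro v hv
      have hv : P v := by simpa [D] using hv
      obtain ⟨h1, h2⟩ := hgg v hv
      have : g v ∈ Y := by
        simp only [Y, Finset.mem_filter, Finset.mem_univ, true_and]
        rintro ⟨u', hu', h3⟩
        have t1 := tw u' (g v) v h3 hu'.ne (hu'.trans h1).ne' h1.ne'
        have t2 := tw (g v) v u' h2 h1.ne hu'.ne (hu'.trans h1).ne
        apply t1.2
        rw [hg.1 u' v, ← t2.1, hg.1]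
      rw [Finset.mem_coe, Finset.mem_filter]
      refine ⟨this, good_of_twin hg hF (mem_univ _) (mem_univ v) h1.ne h2 ?_⟩
      intro x hx
      refine (@Finset.mem_erase _ (_) _ _ _).2 ⟨?_, mem_univ _⟩
      rintro rfl
      simp only [Y, Finset.mem_filter, Finset.mem_univ, true_and] at hx
      exact hx hv
    · intro v hv v' hv' he
      have hv : P v := by simpa [D] using hv
      have hv' : P v' := by simpa [D] using hv'
      by_contra hne
      obtain ⟨h1, h2⟩ := hgg v hv
      obtain ⟨h3, h4⟩ := hgg v' hv'
      rw [← he] at h3 h4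
      have t1 := tw (g v) v v' h2 h1.ne h3.ne' (Ne.symm hne)
      have t2 := tw (g v) v' v h4 h3.ne h1.ne' hne
      apply t1.2
      rw [t1.1, hg.1, ← t2.1]
  have hW : W c Y l = Y.card + (Y.filter (fun v => ¬ Bad c Y l v)).card := by
    unfold W
    rw [Finset.card_filter (fun v => ¬ Bad c Y l v) Y, Finset.card_eq_sum_ones Y, ← Finset.sum_add_distrib]
    refine Finset.sum_congr rfl fun v _ => ?_
    by_cases h : Bad c Y l v
    · rw [wt_bad h]; simp [h]
    · rw [wt_good h]; simp [h]
  omega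

theorem upper {k s r n : ℕ} (hs : Odd s) (hr : Odd r) (hsr : s + r < k)
    (c : Fin n → Fin n → Fin k) (hc : IsGallaiColoring c)
    (hno : ∀ i, ¬ HasMonoCopy (mixPKH k s r i).2 c i) :
    n ≤ 16 * 5 ^ ((s - 1) / 2) * 17 ^ ((r - 1) / 2) := by
  have hg : Gal c := by
    refine ⟨hc.1, ?_⟩
    intro u v w h1 h2 h3
    by_contra h
    push Not at h
    exact hc.2 ⟨u, v, w, h1, h2, h3, h⟩
  have hF := lv_fr hc.1 hno
  obtain ⟨Y, hY⟩ := card_le_W hg hF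
  obtain ⟨a, rfl⟩ := hs
  obtain ⟨b, rfl⟩ := hr
  have : Nontrivial (Fin k) := Fin.nontrivial_iff_two_le.2 (by omega)
  have h := main_bound hg (Y.card + 1) Y (by omega) (lv k (2 * a + 1) (2 * b + 1))
    (by intro p; unfold lv; split_ifs <;> omega) (fun p => (hF p).mono (subset_univ _))
  rw [val_lv hsr] at h
  have hf : f (2 * a + 1) (2 * b + 1) = 8 * (5 ^ a * 17 ^ b) := by
    unfold f
    rw [show (2 * a + 1) / 2 = a by omega, show (2 * b + 1) / 2 = b by omega,
      if_neg (by omega), if_neg (by omega)]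
  rw [hf] at h
  have h2 : ((n : ℕ) : ℚ) ≤ ((16 * 5 ^ a * 17 ^ b : ℕ) : ℚ) := by
    refine le_trans (Nat.cast_le.2 hY) (h.trans (le_of_eq ?_))
    push_cast; ring
  simpa using (Nat.cast_le.1 h2)

end upper
end GRX


namespace GRX
open Finset

section lower

/-- no clique of size `m` in colour `p` -/
def NoC {V K : Type} (c : V → V → K) (p : K) (m : ℕ) : Prop :=
  ∀ g : Fin m → V, Function.Injective g → (∀ a b, a ≠ b → c (g a) (g b) = p) → False

def tt (r p : ℕ) : ℕ := if p < r then 4 else 3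

structure Spc (s r : ℕ) {V : Type} (c : V → V → ℕ) (C : ℕ → Prop) : Prop where
  sym : ∀ u v, c u v = c v u
  mem : ∀ u v, u ≠ v → C (c u v)
  gal : ∀ u v w, u ≠ v → u ≠ w → v ≠ w → c u v = c u w ∨ c u v = c v w ∨ c u w = c v w
  noc : ∀ p, p < r + s → NoC c p (tt r p)
  nop : ∀ p, r + s ≤ p → ∀ u v w, u ≠ v → u ≠ w → v ≠ w → c u v = p → c v w = p → False

open Classical in
noncomputable def lex {U V : Type} (d : U → U → Bool) (p q : ℕ) (c : V → V → ℕ) (x y : U × V) : ℕ :=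
  if x.1 = y.1 then c x.2 y.2 else if d x.1 y.1 then p else q

lemma lex_spc {s r : ℕ} {U V : Type} {c : V → V → ℕ} {C C' : ℕ → Prop} (h : Spc s r c C)
    (d : U → U → Bool) (hd : ∀ a b, d a b = d b a) {p q : ℕ} (hpq : p ≠ q) (hp : ¬ C p)
    (hq : ¬ C q) (hp' : p < r + s) (hq' : q < r + s) (fp : NoC d true (tt r p))
    (fq : NoC d false (tt r q)) (hC : ∀ z, C z ∨ z = p ∨ z = q → C' z) :
    Spc s r (lex d p q c) C' := by
  have e1 : ∀ x y : U × V, x.1 = y.1 → lex d p q c x y = c x.2 y.2 := by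
    intro x y h; simp [lex, h]
  have e2 : ∀ x y : U × V, x.1 ≠ y.1 → lex d p q c x y = if d x.1 y.1 then p else q := by
    intro x y h; simp [lex, h]
  have hne : ∀ x y : U × V, x ≠ y → x.1 = y.1 → x.2 ≠ y.2 := by
    intro x y hxy h1 h2; exact hxy (Prod.ext h1 h2)
  have kp : ∀ x y : U × V, x ≠ y → lex d p q c x y = p → x.1 ≠ y.1 ∧ d x.1 y.1 = true := by
    intro x y hxy he
    by_cases h1 : x.1 = y.1
    · rw [e1 x y h1] at he
      exact absurd (he ▸ h.mem _ _ (hne x y hxy h1)) hp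
    · refine ⟨h1, ?_⟩
      rw [e2 x y h1] at he
      by_contra h2
      rw [if_neg h2] at he
      exact hpq he.symm
  have kq : ∀ x y : U × V, x ≠ y → lex d p q c x y = q → x.1 ≠ y.1 ∧ d x.1 y.1 = false := by
    intro x y hxy he
    by_cases h1 : x.1 = y.1
    · rw [e1 x y h1] at he
      exact absurd (he ▸ h.mem _ _ (hne x y hxy h1)) hq
    · refine ⟨h1, ?_⟩
      rw [e2 x y h1] at he
      by_contra h2
      rw [if_pos (by simpa using h2)] at he
      exact hpq he
  have ko : ∀ z, z ≠ p → z ≠ q → ∀ x y : U × V, lex d p q c x y = z →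
      x.1 = y.1 ∧ c x.2 y.2 = z := by
    intro z hzp hzq x y he
    by_cases h1 : x.1 = y.1
    · exact ⟨h1, by rw [← he, e1 x y h1]⟩
    · rw [e2 x y h1] at he
      split_ifs at he
      · exact absurd he.symm hzp
      · exact absurd he.symm hzq
  refine ⟨?_, ?_, ?_, ?_, ?_⟩
  · intro x y
    by_cases h1 : x.1 = y.1
    · rw [e1 x y h1, e1 y x h1.symm, h.sym]
    · rw [e2 x y h1, e2 y x (Ne.symm h1), hd]
  · intro x y hxy
    apply hC
    by_cases h1 : x.1 = y.1
    · rw [e1 x y h1]; exact Or.inl (h.mem _ _ (hne x y hxy h1))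
    · rw [e2 x y h1]; right; split_ifs <;> simp
  · intro x y z hxy hxz hyz
    by_cases h1 : x.1 = y.1
    · by_cases h2 : x.1 = z.1
      · rw [e1 x y h1, e1 x z h2, e1 y z (h1.symm.trans h2)]
        exact h.gal _ _ _ (hne _ _ hxy h1) (hne _ _ hxz h2) (hne _ _ hyz (h1.symm.trans h2))
      · right; right
        rw [e2 x z h2, e2 y z (h1 ▸ h2), h1]
    · by_cases h2 : x.1 = z.1
      · right; left
        rw [e2 x y h1, e2 y z (fun h => h1 (h2.trans h.symm)), hd, h2]
      · by_cases h3 : y.1 = z.1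
        · left
          rw [e2 x y h1, e2 x z h2, h3]
        · rw [e2 x y h1, e2 x z h2, e2 y z h3]
          cases d x.1 y.1 <;> cases d x.1 z.1 <;> cases d y.1 z.1 <;> simp
  · intro z hz g hgi hg
    by_cases hzp : z = p
    · subst hzp
      refine fp (fun a => (g a).1) ?_ ?_
      · intro a b hab
        by_contra hne'
        exact (kp _ _ (fun h => hne' (hgi h)) (hg a b hne')).1 hab
      · intro a b hab
        exact (kp _ _ (fun h => hab (hgi h)) (hg a b hab)).2
    by_cases hzq : z = q
    · subst hzq
      refine fq (fun a => (g a).1) ?_ ?_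
      · intro a b hab
        by_contra hne'
        exact (kq _ _ (fun h => hne' (hgi h)) (hg a b hne')).1 hab
      · intro a b hab
        exact (kq _ _ (fun h => hab (hgi h)) (hg a b hab)).2
    refine h.noc z hz (fun a => (g a).2) ?_ ?_
    · intro a b hab
      by_contra hne'
      have := ko z hzp hzq _ _ (hg a b hne')
      exact hne' (hgi (Prod.ext this.1 hab))
    · intro a b hab
      exact (ko z hzp hzq _ _ (hg a b hab)).2
  · intro z hz x y w hxy hxw hyw h1 h2
    have a1 := ko z (by omega) (by omega) _ _ h1
    have a2 := ko z (by omega) (by omega) _ _ h2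
    exact h.nop z hz x.2 y.2 w.2 (hne _ _ hxy a1.1) (hne _ _ hxw (a1.1.trans a2.1))
      (hne _ _ hyw a2.1) a1.2 a2.2

/-- circulant two-colouring of `Fin m` given by a bit mask -/
def circ (m mask : ℕ) (a b : Fin m) : Bool := (mask / 2 ^ ((a.val + m - b.val) % m)) % 2 == 1

lemma noc3 {V K : Type} {c : V → V → K} {p : K}
    (h : ∀ x y, x ≠ y → c x y = p → ∀ z, x ≠ z → c x z = p → y ≠ z → c y z = p → False) :
    NoC c p 3 := by
  intro g hg hc
  have H : ∀ a b, a ≠ b → g a ≠ g b := fun a b hab he => hab (hg he)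
  have h01 : (0 : Fin 3) ≠ 1 := by decide
  have h02 : (0 : Fin 3) ≠ 2 := by decide
  have h12 : (1 : Fin 3) ≠ 2 := by decide
  exact h (g 0) (g 1) (H _ _ h01) (hc _ _ h01) (g 2) (H _ _ h02) (hc _ _ h02) (H _ _ h12)
    (hc _ _ h12)

lemma noc4 {V K : Type} {c : V → V → K} {p : K}
    (h : ∀ x y, x ≠ y → c x y = p → ∀ z, x ≠ z → c x z = p → y ≠ z → c y z = p →
      ∀ w, x ≠ w → c x w = p → y ≠ w → c y w = p → z ≠ w → c z w = p → False) :
    NoC c p 4 := by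
  intro g hg hc
  have H : ∀ a b, a ≠ b → g a ≠ g b := fun a b hab he => hab (hg he)
  have h01 : (0 : Fin 4) ≠ 1 := by decide
  have h02 : (0 : Fin 4) ≠ 2 := by decide
  have h12 : (1 : Fin 4) ≠ 2 := by decide
  have h03 : (0 : Fin 4) ≠ 3 := by decide
  have h13 : (1 : Fin 4) ≠ 3 := by decide
  have h23 : (2 : Fin 4) ≠ 3 := by decide
  exact h (g 0) (g 1) (H _ _ h01) (hc _ _ h01) (g 2) (H _ _ h02) (hc _ _ h02) (H _ _ h12)
    (hc _ _ h12) (g 3) (H _ _ h03) (hc _ _ h03) (H _ _ h13) (hc _ _ h13) (H _ _ h23) (hc _ _ h23)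

lemma circ17 (x a b : Fin 17) : circ 17 107286 (a - x) (b - x) = circ 17 107286 a b := by
  have h : ∀ a b : Fin 17, (a.val + 17 - b.val) % 17 = (a - b).val := by
    intro a b
    rw [Fin.val_sub]; congr 1; omega
  unfold circ
  rw [h, h, sub_sub_sub_cancel_right]

lemma noc17 {p : Bool}
    (h : ∀ y : Fin 17, 0 ≠ y → circ 17 107286 0 y = p → ∀ z, 0 ≠ z → circ 17 107286 0 z = p →
      y ≠ z → circ 17 107286 y z = p → ∀ w, 0 ≠ w → circ 17 107286 0 w = p → y ≠ w →
      circ 17 107286 y w = p → z ≠ w → circ 17 107286 z w = p → False) :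
    NoC (circ 17 107286) p 4 := by
  have key : ∀ x a b : Fin 17, a ≠ b → circ 17 107286 a b = p →
      a - x ≠ b - x ∧ circ 17 107286 (a - x) (b - x) = p := by
    intro x a b hab he
    exact ⟨fun h => hab (sub_left_injective h), by rw [circ17]; exact he⟩
  apply noc4
  intro x y a1 a2 z a3 a4 a5 a6 w a7 a8 a9 a10 a11 a12
  have e1 := key x _ _ a1 a2
  have e2 := key x _ _ a3 a4
  have e3 := key x _ _ a5 a6
  have e4 := key x _ _ a7 a8
  have e5 := key x _ _ a9 a10
  have e6 := key x _ _ a11 a12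
  rw [sub_self] at e1 e2 e4
  exact h _ e1.1 e1.2 _ e2.1 e2.2 e3.1 e3.2 _ e4.1 e4.2 e5.1 e5.2 e6.1 e6.2

lemma c5s : ∀ a b, circ 5 18 a b = circ 5 18 b a := by decide +kernel
lemma c5t : NoC (circ 5 18) true 3 := noc3 (by decide +kernel)
lemma c5f : NoC (circ 5 18) false 3 := noc3 (by decide +kernel)
lemma c8s : ∀ a b, circ 8 108 a b = circ 8 108 b a := by decide +kernel
lemma c8t : NoC (circ 8 108) true 4 := noc4 (by decide +kernel)
lemma c8f : NoC (circ 8 108) false 3 := noc3 (by decide +kernel)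
lemma c17s : ∀ a b, circ 17 107286 a b = circ 17 107286 b a := by decide +kernel
lemma c17t : NoC (circ 17 107286) true 4 := noc17 (by decide +kernel)
lemma c17f : NoC (circ 17 107286) false 4 := noc17 (by decide +kernel)

def CC (s r x y z : ℕ) : Prop := z = r + s ∨ (r ≤ z ∧ z < r + 1 + 2 * x) ∨ z < 1 + 2 * y

lemma build (a b : ℕ) : ∀ x, x ≤ a → ∀ y, y ≤ b → ∃ (V : Type) (_ : Fintype V) (c : V → V → ℕ),
    Spc (2 * a + 1) (2 * b + 1) c (CC (2 * a + 1) (2 * b + 1) x y) ∧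
      Fintype.card V = 16 * 5 ^ x * 17 ^ y := by
  have base : ∃ (V : Type) (_ : Fintype V) (c : V → V → ℕ),
      Spc (2 * a + 1) (2 * b + 1) c (fun z => z = (2 * b + 1) + (2 * a + 1)) ∧ Fintype.card V = 2 := by
    refine ⟨Fin 2, inferInstance, fun _ _ => (2 * b + 1) + (2 * a + 1), ⟨?_, ?_, ?_, ?_, ?_⟩, by simp⟩
    · intros; rfl
    · intros; rfl
    · intros; left; rfl
    · intro p hp g hg h
      have : 3 ≤ tt (2 * b + 1) p := by unfold tt; split_ifs <;> omega
      have := h ⟨0, by omega⟩ ⟨1, by omega⟩ (by simp)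
      simp only at this
      omega
    · intro p hp u v w h1 h2 h3
      omega
  intro x
  induction x with
  | zero =>
    intro _ y
    induction y with
    | zero =>
      intro _
      obtain ⟨V, hV, c, hc, hn⟩ := base
      refine ⟨Fin 8 × V, inferInstance, _, lex_spc hc (circ 8 108) c8s (p := 0) (q := 2 * b + 1)
        (by omega) (by omega) (by omega) (by omega) (by omega) ?_ ?_ ?_, ?_⟩
      · simpa [tt] using c8t
      · simpa [tt] using c8f
      · intro z hz; unfold CC; omega
      · rw [Fintype.card_prod, hn]; simp
    | succ y ih =>
      intro hy
      obtain ⟨V, hV, c, hc, hn⟩ := ih (by omega)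
      refine ⟨Fin 17 × V, inferInstance, _, lex_spc hc (circ 17 107286) c17s (p := 1 + 2 * y)
        (q := 2 + 2 * y) (by omega) (by unfold CC; omega) (by unfold CC; omega) (by omega) (by omega) ?_ ?_ ?_, ?_⟩
      · rw [tt, if_pos (by omega)]; exact c17t
      · rw [tt, if_pos (by omega)]; exact c17f
      · intro z hz; unfold CC at *; omega
      · rw [Fintype.card_prod, hn]; simp; ring
  | succ x ih =>
    intro hx y hy
    obtain ⟨V, hV, c, hc, hn⟩ := ih (by omega) y hy
    refine ⟨Fin 5 × V, inferInstance, _, lex_spc hc (circ 5 18) c5s (p := 2 * b + 1 + 1 + 2 * x)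
        (q := 2 * b + 1 + 2 + 2 * x) (by omega) (by unfold CC; omega) (by unfold CC; omega) (by omega) (by omega) ?_ ?_ ?_, ?_⟩
    · rw [tt, if_neg (by omega)]; exact c5t
    · rw [tt, if_neg (by omega)]; exact c5f
    · intro z hz; unfold CC at *; omega
    · rw [Fintype.card_prod, hn]; simp; ring

theorem lower {k s r n : ℕ} (hs : Odd s) (hr : Odd r) (hsr : s + r < k)
    (hn : n ≤ 16 * 5 ^ ((s - 1) / 2) * 17 ^ ((r - 1) / 2)) :
    ∃ c : Fin n → Fin n → Fin k, IsGallaiColoring c ∧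
      ∀ i, ¬ HasMonoCopy (mixPKH k s r i).2 c i := by
  obtain ⟨a, rfl⟩ := hs
  obtain ⟨b, rfl⟩ := hr
  obtain ⟨V, hV, c, hc, hcard⟩ := build a b a le_rfl b le_rfl
  have hn' : Fintype.card (Fin n) ≤ Fintype.card V := by
    rw [hcard]; simpa using hn
  obtain ⟨φ⟩ := Function.Embedding.nonempty_of_card_le hn'
  let c' : Fin n → Fin n → Fin k := fun u v => ⟨c (φ u) (φ v) % k, Nat.mod_lt _ (by omega)⟩
  have hφ : ∀ u v, u ≠ v → φ u ≠ φ v := fun u v h h' => h (φ.injective h')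
  have hv : ∀ u v, u ≠ v → (c' u v).val = c (φ u) (φ v) := by
    intro u v huv
    have := hc.mem _ _ (hφ u v huv)
    unfold CC at this
    exact Nat.mod_eq_of_lt (by omega)
  have hv' : ∀ u v i, u ≠ v → c' u v = i → c (φ u) (φ v) = i.val := by
    intro u v i huv h; rw [← hv u v huv, h]
  refine ⟨c', ⟨?_, ?_⟩, ?_⟩
  · intro u v; simp only [c', hc.sym]
  · rintro ⟨u, v, w, huv, huw, hvw, h1, h2, h3⟩
    rw [Ne, Fin.ext_iff, hv _ _ huv, hv _ _ huw] at h1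
    rw [Ne, Fin.ext_iff, hv _ _ huv, hv _ _ hvw] at h2
    rw [Ne, Fin.ext_iff, hv _ _ huw, hv _ _ hvw] at h3
    rcases hc.gal _ _ _ (hφ _ _ huv) (hφ _ _ huw) (hφ _ _ hvw) with h | h | h
    · exact h1 h
    · exact h2 h
    · exact h3 h
  · intro i
    by_cases h : (i : ℕ) < 2 * b + 1
    · rw [mix_H h]
      rintro ⟨g, hg, hgc⟩
      have := hc.noc i (by omega)
      rw [tt, if_pos h] at this
      refine this (fun x => φ (g x.succ)) ?_ ?_
      · intro x y hxy
        exact Fin.succ_injective _ (hg (φ.injective hxy))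
      · intro x y hxy
        refine hv' _ _ _ (fun h' => hxy (Fin.succ_injective _ (hg h'))) (hgc _ _ ?_)
        simp [GH3, Fin.succ_ne_zero, hxy]
    by_cases h' : (i : ℕ) < 2 * b + 1 + (2 * a + 1)
    · rw [mix_K h h']
      rintro ⟨g, hg, hgc⟩
      have := hc.noc i (by omega)
      rw [tt, if_neg h] at this
      refine this (fun x => φ (g x)) ?_ ?_
      · intro x y hxy
        exact (hg (φ.injective hxy))
      · intro x y hxy
        refine hv' _ _ _ (fun h' => hxy (hg h')) (hgc _ _ ?_)
        simp [GK3, hxy]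
    · rw [mix_P h h']
      rintro ⟨g, hg, hgc⟩
      have H : ∀ a b, a ≠ b → g a ≠ g b := fun a b hab he => hab (hg he)
      have h01 : (0 : Fin 3) ≠ 1 := by decide
      have h02 : (0 : Fin 3) ≠ 2 := by decide
      have h12 : (1 : Fin 3) ≠ 2 := by decide
      exact hc.nop i (by omega) _ _ _ (hφ _ _ (H _ _ h01)) (hφ _ _ (H _ _ h02)) (hφ _ _ (H _ _ h12))
        (hv' _ _ _ (H _ _ h01) (hgc 0 1 (by simp [GP3])))
        (hv' _ _ _ (H _ _ h12) (hgc 1 2 (by simp [GP3])))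

end lower
end GRX

theorem GR_mixPKH_b6 (k s r : ℕ) (hk : 1 ≤ k) (hs : Odd s) (hr : Odd r)
    (hsr : s + r < k) :
    GR k (mixPKH k s r) = 16 * 5 ^ ((s - 1) / 2) * 17 ^ ((r - 1) / 2) + 1 := by
  unfold GR
  apply le_antisymm
  · apply Nat.sInf_le
    intro c hc
    by_contra h
    push Not at h
    have := GRX.upper hs hr hsr c hc h
    omega
  · apply le_csInf
    · refine ⟨16 * 5 ^ ((s - 1) / 2) * 17 ^ ((r - 1) / 2) + 1, ?_⟩
      intro c hc
      by_contra h
      push Not at h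
      have := GRX.upper hs hr hsr c hc h
      omega
    · intro n hn
      by_contra hlt
      obtain ⟨c, hc, hno⟩ := GRX.lower (n := n) hs hr hsr (by omega)
      obtain ⟨i, hi⟩ := hn c hc
      exact hno i hi
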